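/- arXiv:1605.00088 — 2 statements merged into one kernel-verified Lean document; each statement's English description precedes it below -/
import Mathlib

section
/- For a fixed non-square integer D, the set of primes p with Kronecker-Legendre symbol (D/p) = 1 has natural density 1/2 in the primes: #{p ≤ x prime : (D/p) = 1} ~ π(x)/2 as x → ∞. -/
open Filter Asymptotics

/-!
By the Wiener–Ikehara theorem, a nonnegative sequence whose partial sums are `O(n)` and whose
Dirichlet series continues, minus `A / (s - 1)`, continuously to the line `Re s = 1` has mean value
`A`. To see this, put `B t = e⁻ᵗ ∑_{k ≤ eᵗ} a k`; smoothing `B` by the Fejér kernel gives, by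
Parseval on the lines `Re s = 1 + ε` as `ε → 0`, the constant `A` plus a Fourier transform of a
compactly supported continuous function, so the averages tend to `A` by Riemann–Lebesgue. As
`eᵗ B t` is monotone and the Fejér kernels concentrate at the origin, `B` tends to `A` as well.

Since Dirichlet `L`-functions do not vanish on `Re s = 1`, this applies to the von Mangoldt function
on a residue class, and prime powers being negligible, the primes are equidistributed among the
classes of units modulo any `q`. Finally `n ↦ (D/n)` is a `±1`-valued character of the units modulo
`4 |D|`, nontrivial because `D` is not a square, so it takes the value `1` on exactly half of them.
-/

section

open MeasureTheory Topology FourierTransform ComplexConjugate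

section LaplaceBoundary

variable {f : ℝ → ℂ} {M : ℝ} {G : ℂ → ℂ} {φ : ℝ → ℂ}

theorem norm_mul_cexp_neg_mul_le (hM : ∀ t, ‖f t‖ ≤ M) (hf₀ : ∀ t < 0, f t = 0) (z : ℂ) (t : ℝ) :
    ‖f t * Complex.exp (-z * t)‖ ≤ (Set.Ici 0).indicator (fun t ↦ M * Real.exp (-z.re * t)) t := by
  by_cases ht : 0 ≤ t
  · simpa [ht, Complex.norm_exp] using mul_le_mul_of_nonneg_right (hM t) (Real.exp_pos _).le
  · simp [ht, hf₀ t (not_le.mp ht)]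

theorem integrable_mul_cexp_neg_mul (hf : AEStronglyMeasurable f) (hM : ∀ t, ‖f t‖ ≤ M)
    (hf₀ : ∀ t < 0, f t = 0) {z : ℂ} (hz : 0 < z.re) :
    Integrable fun t : ℝ ↦ f t * Complex.exp (-z * t) := by
  have hbound : IntegrableOn (fun t ↦ M * Real.exp (-z.re * t)) (Set.Ici 0) :=
    Iff.mpr integrableOn_Ici_iff_integrableOn_Ioi
      ((integrableOn_exp_mul_Ioi (neg_lt_zero.mpr hz) 0).const_mul M)
  exact ((integrable_indicator_iff measurableSet_Ici).mpr hbound).mono'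
    (hf.mul (by fun_prop)) (.of_forall (norm_mul_cexp_neg_mul_le hM hf₀ z))

theorem fourier_mul_cexp_neg_mul (f : ℝ → ℂ) (ε : ℂ) (y : ℝ) :
    𝓕 (fun t : ℝ ↦ f t * Complex.exp (-ε * t)) y
      = ∫ t : ℝ, f t * Complex.exp (-(ε + 2 * Real.pi * y * Complex.I) * t) := by
  rw [Real.fourier_real_eq_integral_exp_smul]
  refine integral_congr_ae (.of_forall fun t ↦ ?_)
  simp only [smul_eq_mul]
  rw [mul_left_comm, ← Complex.exp_add]
  congr 2
  push_cast
  ring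

theorem fourier_fourierChar_smul (φ : ℝ → ℂ) (x t : ℝ) :
    𝓕 (fun y ↦ 𝐞 (y * x) • φ y) t = 𝓕 φ (t - x) := by
  simp_rw [Real.fourier_real_eq, smul_smul, ← AddChar.map_add_eq_mul]
  refine integral_congr_ae (.of_forall fun y ↦ ?_)
  ring_nf

theorem integral_fourier_mul_eq {f g : ℝ → ℂ} (hf : Integrable f) (hg : Integrable g) :
    ∫ y, 𝓕 f y * g y = ∫ t, f t * 𝓕 g t := by
  have hflip := VectorFourier.integral_fourierIntegral_smul_eq_flip (L := innerₗ ℝ)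
    Real.continuous_fourierChar continuous_inner hf hg
  rwa [flip_innerₗ] at hflip

theorem integral_mul_cexp_neg_mul_fourier (hf : AEStronglyMeasurable f) (hM : ∀ t, ‖f t‖ ≤ M)
    (hf₀ : ∀ t < 0, f t = 0) (hφ : Integrable φ) {ε : ℂ} (hε : 0 < ε.re) (x : ℝ) :
    ∫ t : ℝ, f t * Complex.exp (-ε * t) * 𝓕 φ (t - x)
      = ∫ y : ℝ, (∫ t : ℝ, f t * Complex.exp (-(ε + 2 * Real.pi * y * Complex.I) * t)) *
          𝐞 (y * x) • φ y := by
  have hmod : Integrable fun y ↦ 𝐞 (y * x) • φ y := by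
    refine hφ.mono (((Real.continuous_fourierChar.comp (by fun_prop)).aestronglyMeasurable).smul
      hφ.1) (.of_forall fun y ↦ ?_)
    simp
  simp_rw [← fourier_mul_cexp_neg_mul f ε]
  rw [integral_fourier_mul_eq (integrable_mul_cexp_neg_mul hf hM hf₀ hε) hmod]
  simp_rw [fourier_fourierChar_smul]

theorem tendsto_integral_mul_cexp_neg_mul_mul {k : ℝ → ℂ} (hf : AEStronglyMeasurable f)
    (hM : ∀ t, ‖f t‖ ≤ M) (hf₀ : ∀ t < 0, f t = 0) (hk : Integrable k) :
    Tendsto (fun ε : ℝ ↦ ∫ t : ℝ, f t * Complex.exp (-ε * t) * k t) (𝓝[>] 0)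
      (𝓝 (∫ t, f t * k t)) := by
  refine tendsto_integral_filter_of_dominated_convergence (fun t ↦ M * ‖k t‖)
    (.of_forall fun ε ↦ (hf.mul (by fun_prop)).mul hk.1) ?_ (hk.norm.const_mul M)
    (.of_forall fun t ↦ ?_)
  · filter_upwards [self_mem_nhdsWithin] with ε (hε : 0 < ε)
    refine .of_forall fun t ↦ ?_
    have hexp : ‖f t * Complex.exp (-ε * t)‖ ≤ M := by
      refine (norm_mul_cexp_neg_mul_le hM hf₀ ε t).trans
        (Set.indicator_le' (fun t (ht : 0 ≤ t) ↦ ?_) (fun _ _ ↦ (norm_nonneg _).trans (hM 0)) t)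
      refine mul_le_of_le_one_right ((norm_nonneg _).trans (hM 0)) (Real.exp_le_one_iff.mpr ?_)
      simpa using mul_nonneg hε.le ht
    rw [norm_mul]
    gcongr
  · have hcont : Continuous fun ε : ℝ ↦ f t * Complex.exp (-ε * t) * k t := by fun_prop
    simpa using (hcont.tendsto 0).mono_left nhdsWithin_le_nhds

theorem tendsto_integral_boundary_mul (hG : ContinuousOn G {z | 0 ≤ z.re}) (hφ : Continuous φ)
    (hφs : HasCompactSupport φ) :
    Tendsto (fun ε : ℝ ↦ ∫ y : ℝ, G (ε + 2 * Real.pi * y * Complex.I) * φ y) (𝓝[>] 0)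
      (𝓝 (∫ y : ℝ, G (2 * Real.pi * y * Complex.I) * φ y)) := by
  have hcont : ContinuousOn (fun p : ℝ × ℝ ↦ G (p.1 + 2 * Real.pi * p.2 * Complex.I) * φ p.2)
      (Set.Ici 0 ×ˢ Set.univ) := by
    refine (hG.comp (by fun_prop) fun p hp ↦ ?_).mul (by fun_prop)
    simpa using hp.1
  have hlim := continuousOn_integral_of_compact_support (μ := volume) (f := fun ε y : ℝ ↦
      G (ε + 2 * Real.pi * y * Complex.I) * φ y) (s := Set.Ici 0) hφs hcont
    (fun ε y _ hy ↦ by simp [image_eq_zero_of_notMem_tsupport hy])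
  simpa using (hlim 0 Set.self_mem_Ici).tendsto.mono_left
    (nhdsWithin_mono 0 Set.Ioi_subset_Ici_self)

theorem integral_mul_fourier_sub_eq_fourierInv (hf : AEStronglyMeasurable f) (hM : ∀ t, ‖f t‖ ≤ M)
    (hf₀ : ∀ t < 0, f t = 0) (hG : ContinuousOn G {z | 0 ≤ z.re})
    (hL : ∀ z : ℂ, 0 < z.re → ∫ t : ℝ, f t * Complex.exp (-z * t) = G z)
    (hφ : Continuous φ) (hφs : HasCompactSupport φ) (hφF : Integrable (𝓕 φ)) (x : ℝ) :
    ∫ t, f t * 𝓕 φ (t - x) = 𝓕⁻ (fun y : ℝ ↦ G (2 * Real.pi * y * Complex.I) * φ y) x := by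
  have hmod : Continuous fun y ↦ 𝐞 (y * x) • φ y :=
    (Real.continuous_fourierChar.comp (by fun_prop)).smul hφ
  have hleft := tendsto_integral_mul_cexp_neg_mul_mul hf hM hf₀ (hφF.comp_sub_right x)
  have hright := tendsto_integral_boundary_mul hG hmod hφs.smul_left
  rw [Real.fourierInv_eq]
  refine (tendsto_nhds_unique (hleft.congr' ?_) hright).trans (integral_congr_ae
    (.of_forall fun y ↦ ?_))
  · filter_upwards [self_mem_nhdsWithin] with ε (hε : 0 < ε)
    rw [integral_mul_cexp_neg_mul_fourier hf hM hf₀ (hφ.integrable_of_hasCompactSupport hφs)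
      (by simpa) x]
    refine integral_congr_ae (.of_forall fun y ↦ ?_)
    simp only
    rw [hL _ (by simpa)]
  · simp [mul_comm y x, mul_smul_comm]

theorem tendsto_integral_mul_fourier_sub_of_laplace (hf : AEStronglyMeasurable f)
    (hM : ∀ t, ‖f t‖ ≤ M) (hf₀ : ∀ t < 0, f t = 0) (hG : ContinuousOn G {z | 0 ≤ z.re})
    (hL : ∀ z : ℂ, 0 < z.re → ∫ t : ℝ, f t * Complex.exp (-z * t) = G z)
    (hφ : Continuous φ) (hφs : HasCompactSupport φ) (hφF : Integrable (𝓕 φ)) :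
    Tendsto (fun x ↦ ∫ t, f t * 𝓕 φ (t - x)) atTop (𝓝 0) := by
  simp_rw [integral_mul_fourier_sub_eq_fourierInv hf hM hf₀ hG hL hφ hφs hφF,
    Real.fourierInv_eq_fourier_neg]
  exact (Real.zero_at_infty_fourier _).comp
    (tendsto_neg_atTop_atBot.mono_right atBot_le_cocompact)

end LaplaceBoundary

section Fejer

/-- The triangle function of height `1` supported on `[-l, l]`, the Fourier dual of
`fejerKernel l`. -/
noncomputable def tent (l y : ℝ) : ℝ := max 0 (1 - |y / l|)

/-- The Fejér kernel on the line of bandwidth `l`: a positive approximate identity as `l → ∞`,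
band-limited in the sense that it is the Fourier transform of the compactly supported `tent l`. -/
noncomputable def fejerKernel (l u : ℝ) : ℝ := l * Real.sinc (Real.pi * (l * u)) ^ 2

theorem continuous_tent (l : ℝ) : Continuous (tent l) := by
  unfold tent; fun_prop

theorem tent_apply_zero (l : ℝ) : tent l 0 = 1 := by
  simp [tent]

theorem tent_one_of_mem_Icc {y : ℝ} (hy : y ∈ Set.Icc 0 1) : tent 1 y = 1 - y := by
  simp [tent, abs_of_nonneg hy.1, hy.2]

theorem hasCompactSupport_tent {l : ℝ} (hl : 0 < l) : HasCompactSupport (tent l) := by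
  refine .intro (isCompact_Icc (a := -l) (b := l)) fun y hy ↦ max_eq_left (sub_nonpos.mpr ?_)
  rw [abs_div, abs_of_pos hl, one_le_div hl]
  exact (not_le.mp (mt abs_le.mp hy)).le

theorem fourier_ofReal_of_even {f : ℝ → ℝ} (hf : Integrable f) (hf_even : f.Even) (u : ℝ) :
    𝓕 (fun y ↦ (f y : ℂ)) u = ((∫ y, f y * Real.cos (2 * Real.pi * u * y) : ℝ) : ℂ) := by
  have hexp (y : ℝ) : (𝐞 (-(y * u)) • (f y : ℂ)) =
      f y * Complex.exp ((-(2 * Real.pi * u * y) : ℝ) * Complex.I) := by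
    rw [Circle.smul_def, Real.fourierChar_apply, smul_eq_mul, mul_comm]
    ring_nf
  have hint : Integrable fun y ↦ 𝐞 (-(y * u)) • (f y : ℂ) := by
    simpa [mul_comm] using (Real.fourierIntegral_convergent_iff u).mpr hf.ofReal
  have hconj : conj (∫ y, 𝐞 (-(y * u)) • (f y : ℂ)) = ∫ y, 𝐞 (-(y * u)) • (f y : ℂ) := by
    rw [← integral_conj, ← integral_neg_eq_self]
    refine integral_congr_ae (.of_forall fun y ↦ ?_)
    simp only
    rw [hexp, hexp]
    simp only [hf_even y, map_mul, Complex.conj_ofReal, ← Complex.exp_conj, Complex.conj_I]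
    push_cast
    ring_nf
  rw [Real.fourier_real_eq, ← Complex.conj_eq_iff_re.mp hconj]
  congr 1
  refine (integral_re hint).symm.trans (integral_congr_ae (.of_forall fun y ↦ ?_))
  simp only [hexp, RCLike.re_eq_complex_re, Complex.re_ofReal_mul, Complex.exp_ofReal_mul_I_re,
    Real.cos_neg]

theorem integral_one_sub_mul_cos (w : ℝ) :
    2 * ∫ y in (0 : ℝ)..1, (1 - y) * Real.cos (2 * w * y) = Real.sinc w ^ 2 := by
  rcases eq_or_ne w 0 with rfl | hw
  · have hflip := intervalIntegral.integral_comp_sub_left (a := 0) (b := 1) (fun y : ℝ ↦ y) 1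
    norm_num [hflip]
  have hderiv (y : ℝ) : HasDerivAt
      (fun y ↦ (1 - y) * Real.sin (2 * w * y) / (2 * w) - Real.cos (2 * w * y) / (2 * w) ^ 2)
      ((1 - y) * Real.cos (2 * w * y)) y := by
    have hlin : HasDerivAt (fun y : ℝ ↦ 2 * w * y) (2 * w) y := by
      simpa using (hasDerivAt_id y).const_mul (2 * w)
    refine (((((hasDerivAt_id y).const_sub 1).mul hlin.sin).div_const (2 * w)).sub
      (hlin.cos.div_const ((2 * w) ^ 2))).congr_deriv ?_
    simp only [id]
    field_simp
    ring
  rw [intervalIntegral.integral_eq_sub_of_hasDerivAt (fun y _ ↦ hderiv y)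
    (by apply Continuous.intervalIntegrable; fun_prop), Real.sinc_of_ne_zero hw]
  simp only [mul_one, mul_zero, Real.sin_zero, Real.cos_zero, Real.cos_two_mul']
  field_simp
  linear_combination -Real.sin_sq_add_cos_sq w

theorem integral_tent_mul_cos (w : ℝ) :
    ∫ y, tent 1 y * Real.cos (2 * w * y) = Real.sinc w ^ 2 := by
  have habs (y : ℝ) :
      tent 1 y * Real.cos (2 * w * y) = tent 1 |y| * Real.cos (2 * w * |y|) := by
    congr 1
    · simp [tent]
    · rcases abs_choice y with h | h <;> simp [h]
  have hzero (y : ℝ) (hy : y ∈ Set.Ioi 0 \ Set.Ioc 0 1) :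
      tent 1 y * Real.cos (2 * w * y) = 0 := by
    have hy₁ : 1 < y := not_le.mp fun h ↦ hy.2 ⟨hy.1, h⟩
    have htent : tent 1 y = 0 := by simp [tent, abs_of_pos hy.1.out, hy₁.le]
    rw [htent, zero_mul]
  have hIcc (y : ℝ) (hy : y ∈ Set.Icc 0 1) :
      tent 1 y * Real.cos (2 * w * y) = (1 - y) * Real.cos (2 * w * y) := by
    rw [tent_one_of_mem_Icc hy]
  rw [integral_congr_ae (.of_forall habs),
    integral_comp_abs (f := fun y ↦ tent 1 y * Real.cos (2 * w * y)),
    setIntegral_eq_of_subset_of_forall_sdiff_eq_zero measurableSet_Ioi Set.Ioc_subset_Ioi_self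
      hzero, ← intervalIntegral.integral_of_le zero_le_one, ← integral_one_sub_mul_cos]
  congr 1
  refine intervalIntegral.integral_congr fun y hy ↦ hIcc y ?_
  rwa [Set.uIcc_of_le zero_le_one] at hy

theorem fourier_tent {l : ℝ} (hl : 0 < l) (u : ℝ) :
    𝓕 (fun y ↦ (tent l y : ℂ)) u = fejerKernel l u := by
  have hscale (y : ℝ) : tent l y * Real.cos (2 * Real.pi * u * y) =
      tent 1 (y / l) * Real.cos (2 * (Real.pi * (l * u)) * (y / l)) := by
    simp only [tent, div_one]
    congr 2
    field_simp
  rw [fourier_ofReal_of_even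
      ((continuous_tent l).integrable_of_hasCompactSupport (hasCompactSupport_tent hl))
      (fun y ↦ by simp [tent, neg_div]),
    integral_congr_ae (.of_forall hscale), Measure.integral_comp_div (fun y ↦ tent 1 y *
      Real.cos (2 * (Real.pi * (l * u)) * y)), integral_tent_mul_cos, abs_of_pos hl, smul_eq_mul,
    fejerKernel]

theorem fejerKernel_nonneg {l : ℝ} (hl : 0 < l) (u : ℝ) : 0 ≤ fejerKernel l u := by
  unfold fejerKernel; positivity

theorem sinc_sq_le (x : ℝ) : Real.sinc x ^ 2 ≤ 2 * (1 + x ^ 2)⁻¹ := by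
  have hone : Real.sinc x ^ 2 ≤ 1 := (sq_le_one_iff_abs_le_one _).mpr (Real.abs_sinc_le_one x)
  have hsin : (Real.sinc x * x) ^ 2 ≤ 1 := by
    rcases eq_or_ne x 0 with rfl | hx
    · simp
    · rw [Real.sinc_of_ne_zero hx, div_mul_cancel₀ _ hx]
      exact Real.sin_sq_le_one x
  rw [← div_eq_mul_inv, le_div_iff₀ (by positivity)]
  linear_combination hone + hsin

theorem integrable_fejerKernel {l : ℝ} (hl : 0 < l) : Integrable (fejerKernel l) := by
  have hsinc : Integrable fun x ↦ Real.sinc x ^ 2 :=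
    (integrable_inv_one_add_sq.const_mul 2).mono'
      (Real.continuous_sinc.pow 2).aestronglyMeasurable
      (.of_forall fun x ↦ by simpa using sinc_sq_le x)
  exact ((hsinc.comp_mul_left' Real.pi_ne_zero).comp_mul_left' hl.ne').const_mul l

theorem integrable_fourier_tent {l : ℝ} (hl : 0 < l) :
    Integrable (𝓕 fun y ↦ (tent l y : ℂ)) :=
  (integrable_fejerKernel hl).ofReal.congr (.of_forall fun u ↦ (fourier_tent hl u).symm)

theorem integral_fejerKernel {l : ℝ} (hl : 0 < l) : ∫ u, fejerKernel l u = 1 := by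
  have htent : Continuous fun y ↦ (tent l y : ℂ) :=
    Complex.continuous_ofReal.comp (continuous_tent l)
  have hinv := congrFun (htent.fourierInv_fourier_eq (htent.integrable_of_hasCompactSupport
    ((hasCompactSupport_tent hl).comp_left Complex.ofReal_zero)) (integrable_fourier_tent hl)) 0
  rw [Real.fourierInv_eq, tent_apply_zero] at hinv
  simp only [inner_zero_right, AddChar.map_zero_eq_one, one_smul, fourier_tent hl] at hinv
  exact_mod_cast hinv

theorem tendsto_integral_Icc_fejerKernel {δ : ℝ} (hδ : 0 < δ) :
    Tendsto (fun l ↦ ∫ u in Set.Icc (-δ) δ, fejerKernel l u) atTop (𝓝 1) := by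
  have hscale (l : ℝ) : ∫ u in Set.Icc (-δ) δ, fejerKernel l u =
      ∫ u in (l * -δ)..(l * δ), fejerKernel 1 u := by
    rw [integral_Icc_eq_integral_Ioc, ← intervalIntegral.integral_of_le (by linarith),
      ← intervalIntegral.mul_integral_comp_mul_left, ← intervalIntegral.integral_const_mul]
    simp only [fejerKernel, one_mul]
  have hlim := intervalIntegral_tendsto_integral
    (integrable_fejerKernel one_pos)
    (tendsto_id.atTop_mul_const_of_neg (neg_lt_zero.mpr hδ)) (tendsto_id.atTop_mul_const hδ)
  simp_rw [hscale]
  rwa [integral_fejerKernel one_pos] at hlim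

end Fejer

section Tauberian

variable {B k : ℝ → ℝ} {M δ : ℝ}

theorem exp_neg_mul_le_of_monotone (hB₀ : 0 ≤ B) (hB : Monotone fun t ↦ Real.exp t * B t)
    {x t η : ℝ} (hxt : x ≤ t) (htx : t ≤ x + η) : Real.exp (-η) * B x ≤ B t := by
  calc Real.exp (-η) * B x ≤ Real.exp (x - t) * B x := by
        gcongr
        · exact hB₀ x
        · linarith
    _ = Real.exp (-t) * (Real.exp x * B x) := by rw [← mul_assoc, ← Real.exp_add]; ring_nf
    _ ≤ Real.exp (-t) * (Real.exp t * B t) :=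
      mul_le_mul_of_nonneg_left (hB hxt) (Real.exp_pos _).le
    _ = B t := by rw [← mul_assoc, ← Real.exp_add]; simp

theorem measurable_of_monotone_exp_mul (hB : Monotone fun t ↦ Real.exp t * B t) :
    Measurable B := by
  have hmeas := Real.measurable_exp.inv.mul hB.measurable
  convert hmeas using 1
  ext t
  simp [Real.exp_ne_zero]

theorem integrable_comp_add_mul (hB₀ : 0 ≤ B) (hBM : ∀ t, B t ≤ M)
    (hB : Monotone fun t ↦ Real.exp t * B t) (hk : Integrable k) (x : ℝ) :
    Integrable fun v ↦ B (x + v) * k v :=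
  hk.bdd_mul
    ((measurable_of_monotone_exp_mul hB).comp (measurable_const_add x)).aestronglyMeasurable
    (.of_forall fun v ↦ by simpa [abs_of_nonneg (hB₀ _)] using hBM (x + v))

-- Averaging around `x + δ` puts the window `[x, x + 2δ]` to the right of `x`, where `B` cannot have
-- dropped by more than the factor `e^(-2δ)`.
theorem exp_neg_mul_le_average (hB₀ : 0 ≤ B) (hBM : ∀ t, B t ≤ M)
    (hB : Monotone fun t ↦ Real.exp t * B t) (hk₀ : 0 ≤ k) (hk : Integrable k) (x : ℝ) :
    Real.exp (-(2 * δ)) * B x * ∫ v in Set.Icc (-δ) δ, k v ≤ ∫ v, B (x + δ + v) * k v := by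
  rw [← integral_indicator measurableSet_Icc, ← integral_const_mul]
  refine integral_mono ((hk.indicator measurableSet_Icc).const_mul _)
    (integrable_comp_add_mul hB₀ hBM hB hk _) fun v ↦ ?_
  by_cases hv : v ∈ Set.Icc (-δ) δ
  · simp only [Set.indicator_of_mem hv]
    gcongr
    · exact hk₀ v
    · exact exp_neg_mul_le_of_monotone hB₀ hB (by linarith [hv.1]) (by linarith [hv.2])
  · simpa [hv] using mul_nonneg (hB₀ _) (hk₀ v)

theorem average_le_exp_mul_add (hB₀ : 0 ≤ B) (hBM : ∀ t, B t ≤ M)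
    (hB : Monotone fun t ↦ Real.exp t * B t) (hk₀ : 0 ≤ k) (hk : Integrable k) (x : ℝ) :
    ∫ v, B (x - δ + v) * k v ≤
      Real.exp (2 * δ) * B x * (∫ v, k v) + M * ∫ v in (Set.Icc (-δ) δ)ᶜ, k v := by
  have hcompl := hk.indicator (measurableSet_Icc (a := -δ) (b := δ)).compl
  rw [← integral_indicator measurableSet_Icc.compl, ← integral_const_mul, ← integral_const_mul,
    ← integral_add (hk.const_mul _) (hcompl.const_mul _)]
  refine integral_mono (integrable_comp_add_mul hB₀ hBM hB hk _)
    ((hk.const_mul _).add (hcompl.const_mul _)) fun v ↦ ?_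
  have hmain : 0 ≤ Real.exp (2 * δ) * B x * k v :=
    mul_nonneg (mul_nonneg (Real.exp_pos _).le (hB₀ x)) (hk₀ v)
  by_cases hv : v ∈ Set.Icc (-δ) δ
  · have hslow := exp_neg_mul_le_of_monotone hB₀ hB (x := x - δ + v) (t := x) (η := 2 * δ)
      (by linarith [hv.2]) (by linarith [hv.1])
    rw [Real.exp_neg, inv_mul_le_iff₀ (Real.exp_pos _)] at hslow
    simpa [hv] using mul_le_mul_of_nonneg_right hslow (hk₀ v)
  · have htail := mul_le_mul_of_nonneg_right (hBM (x - δ + v)) (hk₀ v)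
    simp only [Set.indicator_of_mem (Set.mem_compl hv)]
    linarith

theorem tendsto_of_tendsto_average {k : ℝ → ℝ → ℝ} {A : ℝ} (hB₀ : 0 ≤ B) (hBM : ∀ t, B t ≤ M)
    (hB : Monotone fun t ↦ Real.exp t * B t) (hk₀ : ∀ᶠ l in atTop, 0 ≤ k l)
    (hk : ∀ᶠ l in atTop, Integrable (k l)) (hk₁ : ∀ᶠ l in atTop, ∫ v, k l v = 1)
    (hkδ : ∀ δ > 0, Tendsto (fun l ↦ ∫ v in Set.Icc (-δ) δ, k l v) atTop (𝓝 1))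
    (havg : ∀ᶠ l in atTop, Tendsto (fun x ↦ ∫ v, B (x + v) * k l v) atTop (𝓝 A)) :
    Tendsto B atTop (𝓝 A) := by
  refine tendsto_order.mpr ⟨fun a ha ↦ ?_, fun a ha ↦ ?_⟩
  · obtain ⟨δ, hδa, hδ⟩ : ∃ δ : ℝ, Real.exp (2 * δ) * a < A ∧ 0 < δ := by
      have hcont : Continuous fun δ : ℝ ↦ Real.exp (2 * δ) * a := by fun_prop
      have hlim := (hcont.tendsto 0).mono_left (nhdsWithin_le_nhds (s := Set.Ioi 0))
      exact ((hlim.eventually_lt_const (by simpa)).and self_mem_nhdsWithin).exists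
    have hlim : Tendsto (fun l ↦ Real.exp (2 * δ) * a + M * (1 - ∫ v in Set.Icc (-δ) δ, k l v))
        atTop (𝓝 (Real.exp (2 * δ) * a)) := by
      simpa using (((hkδ δ hδ).const_sub 1).const_mul M).const_add (Real.exp (2 * δ) * a)
    obtain ⟨l, hl, hl₀, hli, hl₁, hlA⟩ :=
      ((hlim.eventually_lt_const hδa).and (hk₀.and (hk.and (hk₁.and havg)))).exists
    have hshift := (tendsto_atTop_add_const_right _ (-δ) tendsto_id)
    filter_upwards [(hlA.comp hshift).eventually_const_lt hl] with x hx
    have hupper := average_le_exp_mul_add (δ := δ) hB₀ hBM hB hl₀ hli x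
    rw [setIntegral_compl measurableSet_Icc hli, hl₁, mul_one] at hupper
    exact lt_of_mul_lt_mul_left (lt_of_add_lt_add_right (hx.trans_le hupper)) (Real.exp_pos _).le
  · obtain ⟨δ, hδa, hδ⟩ : ∃ δ : ℝ, A < Real.exp (-(2 * δ)) * a ∧ 0 < δ := by
      have hcont : Continuous fun δ : ℝ ↦ Real.exp (-(2 * δ)) * a := by fun_prop
      have hlim := (hcont.tendsto 0).mono_left (nhdsWithin_le_nhds (s := Set.Ioi 0))
      exact ((hlim.eventually_const_lt (by simpa)).and self_mem_nhdsWithin).exists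
    have hlim : Tendsto (fun l ↦ Real.exp (-(2 * δ)) * a * ∫ v in Set.Icc (-δ) δ, k l v)
        atTop (𝓝 (Real.exp (-(2 * δ)) * a)) := by
      simpa using (hkδ δ hδ).const_mul (Real.exp (-(2 * δ)) * a)
    obtain ⟨l, hl, hl₀, hli, hlA⟩ :=
      ((hlim.eventually_const_lt hδa).and (hk₀.and (hk.and havg))).exists
    have hshift := (tendsto_atTop_add_const_right _ δ tendsto_id)
    filter_upwards [(hlA.comp hshift).eventually_lt_const hl] with x hx
    have hlower := (exp_neg_mul_le_average hB₀ hBM hB hl₀ hli x).trans_lt hx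
    have hmass : 0 ≤ ∫ v in Set.Icc (-δ) δ, k l v :=
      setIntegral_nonneg measurableSet_Icc fun v _ ↦ hl₀ v
    exact lt_of_mul_lt_mul_left (lt_of_mul_lt_mul_right hlower hmass) (Real.exp_pos _).le

end Tauberian

section WienerIkehara

theorem tendsto_average_fejerKernel_zero {f : ℝ → ℝ} {M l : ℝ} {G : ℂ → ℂ} (hl : 0 < l)
    (hf : Measurable f) (hM : ∀ t, |f t| ≤ M) (hf₀ : ∀ t < 0, f t = 0)
    (hG : ContinuousOn G {z | 0 ≤ z.re})
    (hL : ∀ z : ℂ, 0 < z.re → ∫ t : ℝ, f t * Complex.exp (-z * t) = G z) :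
    Tendsto (fun x ↦ ∫ v, f (x + v) * fejerKernel l v) atTop (𝓝 0) := by
  have hlim := tendsto_integral_mul_fourier_sub_of_laplace (f := fun t ↦ (f t : ℂ))
    (Complex.measurable_ofReal.comp hf).aestronglyMeasurable (M := M) (by simpa) (by simpa) hG hL
    (Complex.continuous_ofReal.comp (continuous_tent l))
    ((hasCompactSupport_tent hl).comp_left Complex.ofReal_zero) (integrable_fourier_tent hl)
  have hre := (Complex.continuous_re.tendsto 0).comp hlim
  refine hre.congr fun x ↦ ?_
  have hcast (t : ℝ) : (f t : ℂ) * 𝓕 (Complex.ofReal ∘ tent l) (t - x) =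
      ((f t * fejerKernel l (t - x) : ℝ) : ℂ) := by
    rw [Complex.ofReal_mul, ← fourier_tent hl]
    rfl
  simp only [Function.comp_apply]
  rw [integral_congr_ae (.of_forall hcast), integral_complex_ofReal, Complex.ofReal_re,
    ← integral_sub_right_eq_self (fun v ↦ f (x + v) * fejerKernel l v) x]
  simp

theorem indicator_Ici_comp_add_mul (A : ℝ) (k : ℝ → ℝ) (x v : ℝ) :
    (Set.Ici 0).indicator (fun _ ↦ A) (x + v) * k v = A * (Set.Ici (-x)).indicator k v := by
  by_cases hv : -x ≤ v
  · simp [hv, neg_le_iff_add_nonneg'.mp hv]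
  · simp [hv, mt neg_le_iff_add_nonneg'.mpr hv]

theorem tendsto_average_indicator_Ici {k : ℝ → ℝ} (hk : Integrable k) (A : ℝ) :
    Tendsto (fun x ↦ ∫ v, (Set.Ici 0).indicator (fun _ ↦ A) (x + v) * k v) atTop
      (𝓝 (A * ∫ v, k v)) := by
  simp_rw [indicator_Ici_comp_add_mul, integral_const_mul, integral_indicator measurableSet_Ici]
  exact ((aecover_Ici tendsto_neg_atTop_atBot).integral_tendsto_of_countably_generated
    hk).const_mul A

theorem integral_indicator_Ici_mul_cexp_neg_mul (A : ℝ) {z : ℂ} (hz : 0 < z.re) :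
    ∫ t : ℝ, ((Set.Ici 0).indicator (fun _ ↦ A) t : ℝ) * Complex.exp (-z * t) = A / z := by
  have hind (t : ℝ) : ((Set.Ici 0).indicator (fun _ ↦ A) t : ℝ) * Complex.exp (-z * t) =
      (Set.Ici 0).indicator (fun t : ℝ ↦ A * Complex.exp (-z * t)) t := by
    by_cases ht : 0 ≤ t <;> simp [ht]
  rw [integral_congr_ae (.of_forall hind), integral_indicator measurableSet_Ici,
    integral_Ici_eq_integral_Ioi, integral_const_mul, integral_exp_mul_complex_Ioi (by simpa)]
  simp [div_eq_mul_inv]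

theorem integral_sub_indicator_Ici_mul_cexp_neg_mul {B : ℝ → ℝ} {M : ℝ} (hB : Measurable B)
    (hBM : ∀ t, |B t| ≤ M) (hB_neg : ∀ t < 0, B t = 0) (A : ℝ) {z : ℂ} (hz : 0 < z.re) :
    ∫ t : ℝ, (B t - (Set.Ici 0).indicator (fun _ ↦ A) t : ℝ) * Complex.exp (-z * t) =
      (∫ t : ℝ, B t * Complex.exp (-z * t)) - A / z := by
  have hB_int := integrable_mul_cexp_neg_mul (f := fun t ↦ (B t : ℂ)) (M := M)
    (Complex.measurable_ofReal.comp hB).aestronglyMeasurable (by simpa) (by simpa) hz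
  have hstep_int := integrable_mul_cexp_neg_mul
    (f := fun t ↦ (((Set.Ici 0).indicator (fun _ ↦ A) t : ℝ) : ℂ)) (M := |A|)
    (Complex.measurable_ofReal.comp
      (measurable_const.indicator measurableSet_Ici)).aestronglyMeasurable
    (fun t ↦ by simpa using norm_indicator_le_norm_self (fun _ ↦ A) t)
    (fun t ht ↦ by simp [ht]) hz
  rw [← integral_indicator_Ici_mul_cexp_neg_mul A hz, ← integral_sub hB_int hstep_int]
  simp_rw [Complex.ofReal_sub, sub_mul]

theorem tendsto_average_fejerKernel {B : ℝ → ℝ} {A M l : ℝ} {G : ℂ → ℂ} (hl : 0 < l)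
    (hB : Measurable B) (hBM : ∀ t, |B t| ≤ M) (hB_neg : ∀ t < 0, B t = 0)
    (hG : ContinuousOn G {z | 0 ≤ z.re})
    (hL : ∀ z : ℂ, 0 < z.re → ∫ t : ℝ, B t * Complex.exp (-z * t) = G z + A / z) :
    Tendsto (fun x ↦ ∫ v, B (x + v) * fejerKernel l v) atTop (𝓝 A) := by
  set step : ℝ → ℝ := (Set.Ici 0).indicator fun _ ↦ A with hstep
  have hstep_abs (t : ℝ) : |step t| ≤ |A| := norm_indicator_le_norm_self (fun _ ↦ A) t
  have hk := integrable_fejerKernel hl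
  have hzero := tendsto_average_fejerKernel_zero (f := fun t ↦ B t - step t) (M := M + |A|) hl
    (hB.sub (measurable_const.indicator measurableSet_Ici))
    (fun t ↦ (abs_sub _ _).trans (add_le_add (hBM t) (hstep_abs t)))
    (fun t ht ↦ by simp [hB_neg t ht, hstep, ht]) hG
    (fun z hz ↦ by rw [integral_sub_indicator_Ici_mul_cexp_neg_mul hB hBM hB_neg A hz, hL z hz,
      add_sub_cancel_right])
  have hpole := hzero.add (tendsto_average_indicator_Ici hk A)
  rw [integral_fejerKernel hl, mul_one, zero_add] at hpole
  refine hpole.congr fun x ↦ ?_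
  have hB_int : Integrable fun v ↦ B (x + v) * fejerKernel l v :=
    hk.bdd_mul (hB.comp (measurable_const_add x)).aestronglyMeasurable (.of_forall fun v ↦ hBM _)
  have hstep_int : Integrable fun v ↦ step (x + v) * fejerKernel l v := by
    simp_rw [hstep, indicator_Ici_comp_add_mul]
    exact (hk.indicator measurableSet_Ici).const_mul A
  simp_rw [sub_mul]
  rw [integral_sub hB_int hstep_int, sub_add_cancel]

theorem tendsto_of_laplace_sub_pole {B : ℝ → ℝ} {A M : ℝ} {G : ℂ → ℂ} (hB₀ : 0 ≤ B)
    (hBM : ∀ t, B t ≤ M) (hB : Monotone fun t ↦ Real.exp t * B t) (hB_neg : ∀ t < 0, B t = 0)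
    (hG : ContinuousOn G {z | 0 ≤ z.re})
    (hL : ∀ z : ℂ, 0 < z.re → ∫ t : ℝ, B t * Complex.exp (-z * t) = G z + A / z) :
    Tendsto B atTop (𝓝 A) :=
  tendsto_of_tendsto_average hB₀ hBM hB
    ((eventually_gt_atTop 0).mono fun _ hl ↦ fejerKernel_nonneg hl)
    ((eventually_gt_atTop 0).mono fun _ hl ↦ integrable_fejerKernel hl)
    ((eventually_gt_atTop 0).mono fun _ hl ↦ integral_fejerKernel hl)
    (fun _ hδ ↦ tendsto_integral_Icc_fejerKernel hδ)
    ((eventually_gt_atTop 0).mono fun _ hl ↦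
      tendsto_average_fejerKernel hl (measurable_of_monotone_exp_mul hB)
        (fun t ↦ (abs_of_nonneg (hB₀ t)).trans_le (hBM t)) hB_neg hG hL)

/-- The summatory function of `a`, as a function of a real variable; the term `a 0` is ignored,
as it is by `LSeries`. -/
noncomputable def summatory (a : ℕ → ℝ) (x : ℝ) : ℝ := ∑ k ∈ Finset.Icc 1 ⌊x⌋₊, a k

theorem summatory_nonneg {a : ℕ → ℝ} (ha : 0 ≤ a) (x : ℝ) : 0 ≤ summatory a x :=
  Finset.sum_nonneg fun k _ ↦ ha k

theorem monotone_summatory {a : ℕ → ℝ} (ha : 0 ≤ a) : Monotone (summatory a) := fun _ _ hxy ↦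
  Finset.sum_le_sum_of_subset_of_nonneg (Finset.Icc_subset_Icc le_rfl (Nat.floor_mono hxy))
    fun k _ _ ↦ ha k

theorem summatory_of_lt_one (a : ℕ → ℝ) {x : ℝ} (hx : x < 1) : summatory a x = 0 := by
  simp [summatory, Nat.floor_eq_zero.mpr hx]

theorem exists_summatory_le_mul {a : ℕ → ℝ}
    (hO : (fun n ↦ ∑ k ∈ Finset.Icc 1 n, a k) =O[atTop] fun n ↦ (n : ℝ)) :
    ∃ C, ∀ x, 0 ≤ x → summatory a x ≤ C * x := by
  obtain ⟨C, hC⟩ := (isBigO_nat_atTop_iff (fun n hn ↦ by simp [Nat.cast_eq_zero.mp hn])).mp hO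
  refine ⟨|C|, fun x hx ↦ ?_⟩
  calc summatory a x ≤ C * ⌊x⌋₊ := by
        simpa [summatory] using (le_abs_self _).trans (hC ⌊x⌋₊)
    _ ≤ |C| * x := mul_le_mul (le_abs_self C) (Nat.floor_le hx) (by positivity) (abs_nonneg C)

theorem integral_summatory_exp_mul_cexp_neg_mul {a : ℕ → ℝ} (ha : 0 ≤ a)
    (hO : (fun n ↦ ∑ k ∈ Finset.Icc 1 n, a k) =O[atTop] fun n ↦ (n : ℝ)) {s : ℂ} (hs : 1 < s.re) :
    ∫ t in Set.Ioi (0 : ℝ), summatory a (Real.exp t) * Complex.exp (-s * t) =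
      LSeries (fun n ↦ a n) s / s := by
  have hs₀ : s ≠ 0 := by
    rintro rfl
    exact absurd hs (by simp)
  have himage : Real.exp '' Set.Ioi 0 = Set.Ioi 1 := by
    ext u
    exact ⟨fun ⟨t, ht, htu⟩ ↦ htu ▸ Real.one_lt_exp_iff.mpr ht, fun hu ↦ ⟨Real.log u,
      Real.log_pos hu, Real.exp_log (zero_lt_one.trans hu)⟩⟩
  rw [LSeries_eq_mul_integral_of_nonneg a zero_le_one hs (by simpa using hO) ha,
    mul_div_cancel_left₀ _ hs₀, ← himage, integral_image_eq_integral_abs_deriv_smul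
      measurableSet_Ioi (fun t _ ↦ (Real.hasDerivAt_exp t).hasDerivWithinAt)
      Real.exp_injective.injOn]
  refine integral_congr_ae (.of_forall fun t ↦ ?_)
  have hcpow : (Real.exp t : ℂ) ^ (-(s + 1)) = Complex.exp (t * -(s + 1)) := by
    rw [Complex.cpow_def_of_ne_zero (by simp), ← Complex.ofReal_log (Real.exp_pos t).le,
      Real.log_exp]
  simp only [Real.abs_exp, Complex.real_smul]
  rw [hcpow, mul_left_comm, Complex.ofReal_exp, ← Complex.exp_add, summatory]
  push_cast
  ring_nf

/-- The mean `e⁻ᵗ ∑_{k ≤ eᵗ} a k`, in the logarithmic variable `t` whose Laplace transform is the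
Dirichlet series of `a`. -/
noncomputable def logMean (a : ℕ → ℝ) (t : ℝ) : ℝ := summatory a (Real.exp t) * Real.exp (-t)

theorem logMean_of_neg (a : ℕ → ℝ) {t : ℝ} (ht : t < 0) : logMean a t = 0 := by
  rw [logMean, summatory_of_lt_one a (Real.exp_lt_one_iff.mpr ht), zero_mul]

theorem exp_mul_logMean (a : ℕ → ℝ) (t : ℝ) :
    Real.exp t * logMean a t = summatory a (Real.exp t) := by
  rw [logMean, mul_left_comm, ← Real.exp_add, add_neg_cancel, Real.exp_zero, mul_one]

theorem logMean_log_natCast (a : ℕ → ℝ) {N : ℕ} (hN : 0 < N) :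
    logMean a (Real.log N) = (∑ k ∈ Finset.Icc 1 N, a k) / N := by
  rw [logMean, summatory, Real.exp_neg, Real.exp_log (Nat.cast_pos.mpr hN), Nat.floor_natCast,
    div_eq_mul_inv]

theorem integral_logMean_mul_cexp_neg_mul {a : ℕ → ℝ} (ha : 0 ≤ a)
    (hO : (fun n ↦ ∑ k ∈ Finset.Icc 1 n, a k) =O[atTop] fun n ↦ (n : ℝ)) {z : ℂ} (hz : 0 < z.re) :
    ∫ t : ℝ, logMean a t * Complex.exp (-z * t) = LSeries (fun n ↦ a n) (1 + z) / (1 + z) := by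
  have hexp (t : ℝ) : logMean a t * Complex.exp (-z * t) =
      summatory a (Real.exp t) * Complex.exp (-(1 + z) * t) := by
    rw [logMean, Complex.ofReal_mul, mul_assoc, Complex.ofReal_exp, ← Complex.exp_add]
    push_cast
    ring_nf
  rw [← integral_summatory_exp_mul_cexp_neg_mul ha hO (by simpa), ← integral_Ici_eq_integral_Ioi,
    ← setIntegral_eq_integral_of_forall_compl_eq_zero (s := Set.Ici 0)
      fun t ht ↦ by rw [logMean_of_neg a (not_le.mp ht), Complex.ofReal_zero, zero_mul]]
  simp_rw [hexp]

theorem tendsto_sum_div_of_LSeries_sub_pole {a : ℕ → ℝ} {A : ℝ} {G : ℂ → ℂ} (ha : 0 ≤ a)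
    (hO : (fun n ↦ ∑ k ∈ Finset.Icc 1 n, a k) =O[atTop] fun n ↦ (n : ℝ))
    (hG : ContinuousOn G {s | 1 ≤ s.re})
    (hEq : Set.EqOn G (fun s ↦ LSeries (fun n ↦ a n) s - A / (s - 1)) {s | 1 < s.re}) :
    Tendsto (fun N : ℕ ↦ (∑ k ∈ Finset.Icc 1 N, a k) / N) atTop (𝓝 A) := by
  obtain ⟨C, hC⟩ := exists_summatory_le_mul hO
  have hle (t : ℝ) : logMean a t ≤ C := by
    rw [logMean, Real.exp_neg, ← div_eq_mul_inv, div_le_iff₀ (Real.exp_pos t)]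
    exact hC _ (Real.exp_pos t).le
  have hmono : Monotone fun t ↦ Real.exp t * logMean a t := by
    simp_rw [exp_mul_logMean]
    exact (monotone_summatory ha).comp Real.exp_monotone
  have hne (z : ℂ) (hz : 0 ≤ z.re) : 1 + z ≠ 0 := fun h ↦ by
    have := congrArg Complex.re h
    simp at this
    linarith
  have hcont : ContinuousOn (fun z ↦ (G (1 + z) - A) / (1 + z)) {z | 0 ≤ z.re} := by
    refine ((hG.comp (by fun_prop) fun z hz ↦ ?_).sub continuousOn_const).div (by fun_prop) hne
    simpa using hz
  have hlaplace (z : ℂ) (hz : 0 < z.re) :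
      ∫ t : ℝ, logMean a t * Complex.exp (-z * t) = (G (1 + z) - A) / (1 + z) + A / z := by
    have hz₀ : z ≠ 0 := fun h ↦ by simp [h] at hz
    have hz₁ := hne z hz.le
    rw [integral_logMean_mul_cexp_neg_mul ha hO hz, hEq (by simpa)]
    simp only [add_sub_cancel_left]
    field_simp
    ring
  have hlim := tendsto_of_laplace_sub_pole
    (fun t ↦ mul_nonneg (summatory_nonneg ha _) (Real.exp_pos _).le) hle hmono
    (fun t ↦ logMean_of_neg a) hcont hlaplace
  refine (hlim.comp (Real.tendsto_log_atTop.comp tendsto_natCast_atTop_atTop)).congr' ?_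
  filter_upwards [eventually_gt_atTop 0] with N hN using logMean_log_natCast a hN

end WienerIkehara

section ResidueClass

open ArithmeticFunction.vonMangoldt in
theorem tendsto_sum_residueClass_div {q : ℕ} [NeZero q] {a : ZMod q} (ha : IsUnit a) :
    Tendsto (fun N : ℕ ↦ (∑ k ∈ Finset.Icc 1 N, residueClass a k) / N) atTop
      (𝓝 (q.totient : ℝ)⁻¹) := by
  refine tendsto_sum_div_of_LSeries_sub_pole (residueClass_nonneg a) ?_
    (continuousOn_LFunctionResidueClassAux a) ?_
  · refine .of_bound (Real.log 4 + 4) (.of_forall fun N ↦ ?_)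
    rw [Real.norm_of_nonneg (Finset.sum_nonneg fun k _ ↦ residueClass_nonneg a k),
      Real.norm_of_nonneg N.cast_nonneg]
    calc ∑ k ∈ Finset.Icc 1 N, residueClass a k
        ≤ ∑ k ∈ Finset.Icc 1 N, ArithmeticFunction.vonMangoldt k :=
          Finset.sum_le_sum fun k _ ↦ residueClass_le a k
      _ = Chebyshev.psi N := by rw [Chebyshev.psi, Nat.floor_natCast]; rfl
      _ ≤ (Real.log 4 + 4) * N := Chebyshev.psi_le_const_mul_self N.cast_nonneg
  · simpa using eqOn_LFunctionResidueClassAux ha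

theorem abs_sum_mul_vonMangoldt_sub_sum_mul_log_le {c : ℕ → ℝ} {C : ℝ} (hc : ∀ n, |c n| ≤ C)
    (N : ℕ) :
    |∑ k ∈ Finset.Icc 1 N, c k * ArithmeticFunction.vonMangoldt k -
      ∑ p ∈ Nat.primesLE N, c p * Real.log p| ≤ C * (Chebyshev.psi N - Chebyshev.theta N) := by
  have hprime : ∑ p ∈ Nat.primesLE N, c p * Real.log p =
      ∑ k ∈ Finset.Icc 1 N with k.Prime, c k * ArithmeticFunction.vonMangoldt k := by
    rw [Nat.primesLE_eq_filter_Icc_one]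
    refine Finset.sum_congr rfl fun p hp ↦ ?_
    rw [ArithmeticFunction.vonMangoldt_apply_prime (Finset.mem_filter.mp hp).2]
  rw [hprime, ← Finset.sum_filter_add_sum_filter_not (Finset.Icc 1 N) Nat.Prime,
    add_sub_cancel_left, Chebyshev.psi_sub_theta_eq_sum_not_prime, Nat.floor_natCast,
    Finset.mul_sum]
  refine (Finset.abs_sum_le_sum_abs _ _).trans (Finset.sum_le_sum fun k _ ↦ ?_)
  rw [abs_mul, abs_of_nonneg ArithmeticFunction.vonMangoldt_nonneg]
  exact mul_le_mul_of_nonneg_right (hc k) ArithmeticFunction.vonMangoldt_nonneg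

theorem abs_sum_mul_log_sub_sum_mul_log_le {c : ℕ → ℝ} {C : ℝ} (hc : ∀ n, |c n| ≤ C) (N : ℕ) :
    |(∑ p ∈ Nat.primesLE N, c p) * Real.log N - ∑ p ∈ Nat.primesLE N, c p * Real.log p| ≤
      C * (Nat.primeCounting N * Real.log N - Chebyshev.theta N) := by
  rw [Chebyshev.theta_eq_sum_primesLE_log, ← Nat.primesLE_card_eq_primeCounting, ← nsmul_eq_mul,
    ← Finset.sum_const, Finset.sum_mul, ← Finset.sum_sub_distrib, ← Finset.sum_sub_distrib,
    Finset.mul_sum]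
  refine (Finset.abs_sum_le_sum_abs _ _).trans (Finset.sum_le_sum fun p hp ↦ ?_)
  have hlog : Real.log p ≤ Real.log N := Real.log_le_log
    (Nat.cast_pos.mpr (Nat.prime_of_mem_primesLE hp).pos)
    (Nat.cast_le.mpr (Nat.le_of_mem_primesLE hp))
  rw [← mul_sub, abs_mul, abs_of_nonneg (sub_nonneg.mpr hlog)]
  exact mul_le_mul_of_nonneg_right (hc p) (sub_nonneg.mpr hlog)

theorem isLittleO_mul_inv_self {f : ℝ → ℝ} (hf : Tendsto f atTop atTop) :
    (fun x ↦ x * (f x)⁻¹) =o[atTop] id :=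
  ((isBigO_refl id atTop).mul_isLittleO
    ((isLittleO_one_iff ℝ).mpr hf.inv_tendsto_atTop)).congr_right fun x ↦ mul_one x

theorem isLittleO_psi_sub_theta : (Chebyshev.psi - Chebyshev.theta) =o[atTop] id := by
  refine Chebyshev.isBigO_psi_sub_theta_sqrt.trans_isLittleO
    ((isLittleO_mul_inv_self Real.tendsto_sqrt_atTop).congr_left fun x ↦ ?_)
  rw [← div_eq_mul_inv, Real.div_sqrt]

theorem isLittleO_primeCounting_mul_log_sub_theta :
    (fun x ↦ Nat.primeCounting ⌊x⌋₊ * Real.log x - Chebyshev.theta x) =o[atTop] id := by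
  have hO := Chebyshev.primeCounting_sub_theta_div_log_isBigO.mul (isBigO_refl Real.log atTop)
  refine (hO.congr' ?_ ?_).trans_isLittleO (isLittleO_mul_inv_self Real.tendsto_log_atTop)
  all_goals
    filter_upwards [Real.tendsto_log_atTop.eventually_ne_atTop 0] with x hx
    field_simp

theorem tendsto_sum_primesLE_mul_log_div {c : ℕ → ℝ} {C L : ℝ} (hc : ∀ n, |c n| ≤ C)
    (h : Tendsto (fun N : ℕ ↦ (∑ k ∈ Finset.Icc 1 N, c k * ArithmeticFunction.vonMangoldt k) / N)
      atTop (𝓝 L)) :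
    Tendsto (fun N : ℕ ↦ (∑ p ∈ Nat.primesLE N, c p) * Real.log N / N) atTop (𝓝 L) := by
  have hC : 0 ≤ C := (abs_nonneg _).trans (hc 0)
  have hπ : (fun N : ℕ ↦ Nat.primeCounting N * Real.log N - Chebyshev.theta N) =o[atTop]
      fun N ↦ (N : ℝ) := by
    simpa only [Function.comp_def, Nat.floor_natCast, id] using
      isLittleO_primeCounting_mul_log_sub_theta.comp_tendsto tendsto_natCast_atTop_atTop
  have hpow : (fun N : ℕ ↦ ∑ k ∈ Finset.Icc 1 N, c k * ArithmeticFunction.vonMangoldt k -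
      ∑ p ∈ Nat.primesLE N, c p * Real.log p) =o[atTop] fun N ↦ (N : ℝ) :=
    (IsBigO.of_bound C (.of_forall fun N ↦ (abs_sum_mul_vonMangoldt_sub_sum_mul_log_le hc N).trans
      (mul_le_mul_of_nonneg_left (le_abs_self _) hC))).trans_isLittleO
        (isLittleO_psi_sub_theta.comp_tendsto tendsto_natCast_atTop_atTop)
  have hlog : (fun N : ℕ ↦ (∑ p ∈ Nat.primesLE N, c p) * Real.log N -
      ∑ p ∈ Nat.primesLE N, c p * Real.log p) =o[atTop] fun N ↦ (N : ℝ) :=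
    (IsBigO.of_bound C (.of_forall fun N ↦ (abs_sum_mul_log_sub_sum_mul_log_le hc N).trans
      (mul_le_mul_of_nonneg_left (le_abs_self _) hC))).trans_isLittleO hπ
  have hlim := h.add (hlog.sub hpow).tendsto_div_nhds_zero
  rw [add_zero] at hlim
  refine hlim.congr fun N ↦ ?_
  ring

theorem tendsto_card_primesLE_mul_log_div {q : ℕ} [NeZero q] {a : ZMod q} (ha : IsUnit a) :
    Tendsto (fun N : ℕ ↦ (((Nat.primesLE N).filter fun p : ℕ ↦ (p : ZMod q) = a).card : ℝ) *
      Real.log N / N) atTop (𝓝 (q.totient : ℝ)⁻¹) := by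
  have h := tendsto_sum_primesLE_mul_log_div (c := {n : ℕ | (n : ZMod q) = a}.indicator 1)
    (C := 1) (L := (q.totient : ℝ)⁻¹) (fun n ↦ ?_)
    ((tendsto_sum_residueClass_div ha).congr fun N ↦ ?_)
  · simpa [Set.indicator_apply, Finset.sum_boole] using h
  · exact (norm_indicator_le_norm_self (1 : ℕ → ℝ) n).trans_eq norm_one
  · simp [Set.indicator_apply]

theorem tendsto_primeCounting_mul_log_div :
    Tendsto (fun N : ℕ ↦ Nat.primeCounting N * Real.log N / N) atTop (𝓝 1) := by
  simpa [Subsingleton.elim _ (1 : ZMod 1), Nat.primesLE_card_eq_primeCounting] using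
    tendsto_card_primesLE_mul_log_div (isUnit_one (M := ZMod 1))

theorem tendsto_card_primesLE_div_primeCounting {q : ℕ} [NeZero q] {a : ZMod q} (ha : IsUnit a) :
    Tendsto (fun N : ℕ ↦ (((Nat.primesLE N).filter fun p : ℕ ↦ (p : ZMod q) = a).card : ℝ) /
      Nat.primeCounting N) atTop (𝓝 (q.totient : ℝ)⁻¹) := by
  have h := (tendsto_card_primesLE_mul_log_div ha).div tendsto_primeCounting_mul_log_div one_ne_zero
  rw [div_one] at h
  refine h.congr' ?_
  filter_upwards [eventually_gt_atTop 1] with N hN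
  have hlog : Real.log N ≠ 0 := (Real.log_pos (Nat.one_lt_cast.mpr hN)).ne'
  rw [Pi.div_apply, div_div_div_cancel_right₀ (by positivity), mul_div_mul_right _ _ hlog]

theorem tendsto_card_primesLE_mem_div_primeCounting {q : ℕ} [NeZero q] (U : Finset (ZMod q)ˣ) :
    Tendsto (fun N : ℕ ↦
      (((Nat.primesLE N).filter fun p : ℕ ↦ ∃ u ∈ U, (p : ZMod q) = u).card : ℝ) /
        Nat.primeCounting N) atTop (𝓝 (U.card / q.totient)) := by
  have h := tendsto_finsetSum U fun u _ ↦ tendsto_card_primesLE_div_primeCounting u.isUnit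
  rw [Finset.sum_const, nsmul_eq_mul, ← div_eq_mul_inv] at h
  refine h.congr fun N ↦ ?_
  have hunion : (Nat.primesLE N).filter (fun p : ℕ ↦ ∃ u ∈ U, (p : ZMod q) = u) =
      U.biUnion fun u ↦ (Nat.primesLE N).filter fun p : ℕ ↦ (p : ZMod q) = u := by
    ext p
    simp only [Finset.mem_filter, Finset.mem_biUnion]
    tauto
  rw [hunion, Finset.card_biUnion, Nat.cast_sum, Finset.sum_div]
  intro u _ v _ huv
  refine Finset.disjoint_filter.mpr fun p _ hu hv ↦ huv (Units.ext (hu.symm.trans hv))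

theorem tendsto_card_primesLE_filter_div_primeCounting {q : ℕ} [NeZero q] (U : Finset (ZMod q)ˣ)
    {P : ℕ → Prop} [DecidablePred P]
    (hP : ∀ n (h : n.Coprime q), P n ↔ ZMod.unitOfCoprime n h ∈ U) :
    Tendsto (fun N : ℕ ↦ (((Nat.primesLE N).filter P).card : ℝ) / Nat.primeCounting N) atTop
      (𝓝 (U.card / q.totient)) := by
  have hcoprime (n : ℕ) (h : n.Coprime q) : P n ↔ ∃ u ∈ U, (n : ZMod q) = u := by
    rw [hP n h, ← ZMod.coe_unitOfCoprime n h]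
    simp only [Units.val_inj, exists_eq_right']
  have hlower := tendsto_card_primesLE_mem_div_primeCounting U
  have hupper := hlower.add ((tendsto_natCast_atTop_atTop.comp
    Nat.tendsto_primeCounting).const_div_atTop (q.primeFactors.card : ℝ))
  rw [add_zero] at hupper
  refine tendsto_of_tendsto_of_tendsto_of_le_of_le hlower hupper (fun N ↦ ?_) fun N ↦ ?_
  · refine div_le_div_of_nonneg_right (Nat.cast_le.mpr (Finset.card_le_card
      (Finset.monotone_filter_right _ fun n _ hn ↦ ?_))) (Nat.cast_nonneg _)
    obtain ⟨u, -, hu⟩ := id hn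
    exact (hcoprime n ((ZMod.isUnit_iff_coprime n q).mp (hu ▸ u.isUnit))).mpr hn
  · simp only [Function.comp_apply]
    rw [← add_div]
    refine div_le_div_of_nonneg_right ?_ (Nat.cast_nonneg _)
    rw [← Nat.cast_add, Nat.cast_le]
    refine (Finset.card_le_card fun p hp ↦ ?_).trans (Finset.card_union_le _ _)
    obtain ⟨hpN, hPp⟩ := Finset.mem_filter.mp hp
    by_cases h : p.Coprime q
    · exact Finset.mem_union_left _ (Finset.mem_filter.mpr ⟨hpN, (hcoprime p h).mp hPp⟩)
    · have hpp := Nat.prime_of_mem_primesLE hpN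
      exact Finset.mem_union_right _ (Nat.mem_primeFactors.mpr
        ⟨hpp, not_not.mp (mt hpp.coprime_iff_not_dvd.mpr h), NeZero.ne q⟩)

end ResidueClass

section JacobiSymbol

theorem jacobiSym_eq_of_modEq (D : ℤ) {m n : ℕ} (hm : Odd m) (h : m ≡ n [MOD 4 * D.natAbs]) :
    jacobiSym D m = jacobiSym D n := by
  have hn : Odd n := by
    have h₂ : m ≡ n [MOD 2] := h.of_dvd ⟨2 * D.natAbs, by ring⟩
    rwa [Nat.odd_iff, ← h₂, ← Nat.odd_iff]
  rw [jacobiSym.mod_right D hm, h, ← jacobiSym.mod_right D hn]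

theorem odd_of_coprime_four_mul {n k : ℕ} (h : n.Coprime (4 * k)) : Odd n :=
  Nat.coprime_two_right.mp (h.coprime_dvd_right ⟨2 * k, by ring⟩)

/-- The quadratic character `n ↦ (D/n)` on the units modulo `4 |D|`; the modulus `4 |D|` makes the
Jacobi symbol periodic for every `D`, whatever its residue modulo `4`. -/
def jacobiUnitsHom (D : ℤ) : (ZMod (4 * D.natAbs))ˣ →* ℤ where
  toFun u := jacobiSym D (u : ZMod (4 * D.natAbs)).val
  map_one' := by
    rw [Units.val_one, ← Nat.cast_one, ZMod.val_natCast,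
      ← jacobiSym_eq_of_modEq D odd_one (Nat.mod_modEq 1 _).symm, jacobiSym.one_right]
  map_mul' u v := by
    have hu := odd_of_coprime_four_mul (ZMod.val_coe_unit_coprime u)
    have hv := odd_of_coprime_four_mul (ZMod.val_coe_unit_coprime v)
    rw [Units.val_mul, ZMod.val_mul, ← jacobiSym_eq_of_modEq D (hu.mul hv) (Nat.mod_modEq _ _).symm,
      jacobiSym.mul_right' D hu.pos.ne' hv.pos.ne']

theorem jacobiUnitsHom_unitOfCoprime {D : ℤ} {n : ℕ} (h : n.Coprime (4 * D.natAbs)) :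
    jacobiUnitsHom D (ZMod.unitOfCoprime n h) = jacobiSym D n := by
  rw [jacobiUnitsHom, MonoidHom.coe_mk, OneHom.coe_mk, ZMod.coe_unitOfCoprime, ZMod.val_natCast]
  exact (jacobiSym_eq_of_modEq D (odd_of_coprime_four_mul h) (Nat.mod_modEq _ _).symm).symm

theorem exists_coprime_jacobiSym_prime_mul_eq_neg_one {p : ℕ} {m : ℤ} (hp : p.Prime) (hp₂ : p ≠ 2)
    (hpm : p.Coprime m.natAbs) :
    ∃ k : ℕ, k.Coprime (4 * (p * m).natAbs) ∧ jacobiSym (p * m) k = -1 := by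
  have := Fact.mk hp
  have hp_odd : Odd p := hp.odd_of_ne_two hp₂
  have h4p : Nat.Coprime (4 * m.natAbs) p :=
    ((Nat.coprime_two_left.mpr hp_odd).pow_left 2).mul_left hpm.symm
  obtain ⟨x, hx⟩ := FiniteField.exists_nonsquare (F := ZMod p) (by rwa [ZMod.ringChar_zmod_n])
  -- `k ≡ 1` modulo `4 |m|` makes `(m/k) = 1` and lets reciprocity turn `(p/k)` into `(k/p)`.
  obtain ⟨k, hk_one, hkx⟩ := Nat.chineseRemainder h4p 1 x.val
  have hk_cast : (k : ZMod p) = x := by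
    rw [(ZMod.natCast_eq_natCast_iff _ _ _).mpr hkx, ZMod.natCast_zmod_val]
  have hk_coprime : k.Coprime (4 * m.natAbs) := by
    rw [Nat.Coprime, hk_one.gcd_eq, Nat.gcd_one_left]
  have hk_coprime_p : k.Coprime p := by
    rw [Nat.coprime_comm, hp.coprime_iff_not_dvd, ← ZMod.natCast_eq_zero_iff, hk_cast]
    rintro rfl
    exact hx .zero
  refine ⟨k, ?_, ?_⟩
  · rw [Int.natAbs_mul, Int.natAbs_natCast, mul_left_comm]
    exact hk_coprime_p.mul_right hk_coprime
  · have hm : jacobiSym m k = 1 := by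
      rw [jacobiSym_eq_of_modEq m (odd_of_coprime_four_mul hk_coprime) hk_one, jacobiSym.one_right]
    have hk : jacobiSym k p = -1 := by
      rw [ZMod.nonsquare_iff_jacobiSym_eq_neg_one, Int.cast_natCast, hk_cast]
      exact hx
    rw [jacobiSym.mul_left, hm, mul_one, jacobiSym.quadratic_reciprocity_one_mod_four' hp_odd
      (hk_one.of_mul_right _), hk]

theorem dvd_two_of_squarefree {n : ℕ} (hn : Squarefree n)
    (h : ∀ p, p.Prime → p ∣ n → p = 2) : n ∣ 2 := by
  rw [← Nat.prod_primeFactors_of_squarefree hn, ← Finset.prod_singleton (fun p ↦ p) 2]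
  exact Finset.prod_dvd_prod_of_subset _ _ _ fun p hp ↦ Finset.mem_singleton.mpr
    (h p (Nat.prime_of_mem_primeFactors hp) (Nat.dvd_of_mem_primeFactors hp))

theorem exists_coprime_jacobiSym_eq_neg_one_of_squarefree {d : ℤ} (hd : Squarefree d)
    (hd₁ : d ≠ 1) :
    ∃ k : ℕ, k.Coprime (4 * d.natAbs) ∧ jacobiSym d k = -1 := by
  by_cases! h : ∀ p : ℕ, p.Prime → p ∣ d.natAbs → p = 2
  · have hcases : d = -1 ∨ d = 2 ∨ d = -2 := by
      have := (Nat.dvd_prime Nat.prime_two).mp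
        (dvd_two_of_squarefree (Int.squarefree_natAbs.mpr hd) h)
      omega
    rcases hcases with rfl | rfl | rfl
    · exact ⟨3, by decide, by norm_num⟩
    · exact ⟨3, by decide, by norm_num⟩
    · exact ⟨5, by decide, by norm_num⟩
  · obtain ⟨p, hp, hpd, hp₂⟩ := h
    obtain ⟨m, rfl⟩ := Int.natCast_dvd.mpr hpd
    refine exists_coprime_jacobiSym_prime_mul_eq_neg_one hp hp₂ (Nat.coprime_of_squarefree_mul ?_)
    simpa [Int.natAbs_mul] using Int.squarefree_natAbs.mpr hd

theorem exists_eq_squarefree_mul_sq {D : ℤ} (hD : D ≠ 0) :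
    ∃ (d : ℤ) (b : ℕ), Squarefree d ∧ D = d * (b : ℤ) ^ 2 := by
  obtain ⟨a, b, hab, ha⟩ := Nat.sq_mul_squarefree D.natAbs
  refine ⟨D.sign * a, b, ?_, ?_⟩
  · rw [← Int.squarefree_natAbs, Int.natAbs_mul, Int.natAbs_sign_of_ne_zero hD]
    simpa
  · rw [mul_assoc, ← Nat.cast_pow, ← Nat.cast_mul, mul_comm a, hab, Int.sign_mul_natAbs]

theorem exists_coprime_jacobiSym_eq_neg_one {D : ℤ} (hD : ¬ IsSquare D) :
    ∃ l : ℕ, l.Coprime (4 * D.natAbs) ∧ jacobiSym D l = -1 := by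
  have hD₀ : D ≠ 0 := fun h ↦ hD (h ▸ .zero)
  obtain ⟨d, b, hd, hdb⟩ := exists_eq_squarefree_mul_sq hD₀
  have hd₁ : d ≠ 1 := by
    rintro rfl
    exact hD ⟨b, by rw [hdb]; ring⟩
  obtain ⟨k, hk, hdk⟩ := exists_coprime_jacobiSym_eq_neg_one_of_squarefree hd hd₁
  -- `k` need not be coprime to `b`; a large prime in its class modulo `4 |d|` is.
  obtain ⟨l, hl, hl_prime, hlk⟩ := Nat.forall_exists_prime_gt_and_modEq (4 * D.natAbs)
    (by simpa using hd.ne_zero) hk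
  have hlD : l.Coprime (4 * D.natAbs) :=
    Nat.coprime_of_lt_prime (by simpa using hD₀) hl hl_prime
  refine ⟨l, hlD, ?_⟩
  have hlb : Int.gcd b l = 1 := by
    refine Nat.Coprime.symm (hlD.coprime_dvd_right ?_)
    rw [hdb, Int.natAbs_mul, Int.natAbs_pow, Int.natAbs_natCast]
    exact ⟨4 * d.natAbs * b, by ring⟩
  rw [hdb, jacobiSym.mul_left, jacobiSym.sq_one' hlb, mul_one, ← hdk]
  exact jacobiSym_eq_of_modEq d (odd_of_coprime_four_mul hlD) hlk

theorem two_mul_card_filter_hom_eq_one {G : Type*} [Group G] [Fintype G] {f : G →* ℤ}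
    (hf : f ≠ 1) : 2 * (Finset.univ.filter fun g ↦ f g = 1).card = Fintype.card G := by
  have hterm (g : G) : 1 + f g = if f g = 1 then 2 else 0 := by
    rcases Int.isUnit_iff.mp ((Group.isUnit g).map f) with h | h <;> simp [h]
  have hsum : ∑ g, (1 + f g) = Fintype.card G := by
    rw [Finset.sum_add_distrib, sum_hom_units_eq_zero f hf]
    simp
  rw [Finset.sum_congr rfl fun g _ ↦ hterm g, ← Finset.sum_filter, Finset.sum_const] at hsum
  zify
  rw [← hsum, nsmul_eq_mul, mul_comm]

theorem jacobiUnitsHom_ne_one {D : ℤ} (hD : ¬ IsSquare D) : jacobiUnitsHom D ≠ 1 := by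
  obtain ⟨l, hl, hDl⟩ := exists_coprime_jacobiSym_eq_neg_one hD
  intro h
  have := jacobiUnitsHom_unitOfCoprime hl
  rw [h, hDl, MonoidHom.one_apply] at this
  norm_num at this

end JacobiSymbol

theorem tendsto_card_primesLE_jacobiSym_eq_one_div {D : ℤ} (hD : ¬ IsSquare D) :
    Tendsto (fun N : ℕ ↦ (((Nat.primesLE N).filter fun p ↦ jacobiSym D p = 1).card : ℝ) /
      Nat.primeCounting N) atTop (𝓝 (1 / 2)) := by
  have hD₀ : D ≠ 0 := fun h ↦ hD (h ▸ .zero)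
  have : NeZero (4 * D.natAbs) := ⟨by simpa⟩
  have hhalf := two_mul_card_filter_hom_eq_one (jacobiUnitsHom_ne_one hD)
  rw [ZMod.card_units_eq_totient] at hhalf
  have h := tendsto_card_primesLE_filter_div_primeCounting
    (Finset.univ.filter fun u ↦ jacobiUnitsHom D u = 1) (P := fun n ↦ jacobiSym D n = 1)
    fun n hn ↦ by simp [jacobiUnitsHom_unitOfCoprime]
  have hcard : (0 : ℝ) < (4 * D.natAbs).totient :=
    Nat.cast_pos.mpr (Nat.totient_pos.mpr (Nat.pos_of_neZero _))
  convert h using 2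
  rw [div_eq_div_iff two_ne_zero hcard.ne', ← hhalf]
  push_cast
  ring

end

theorem stmt_0 (D : ℤ) (hD : ¬ IsSquare D) :
    IsEquivalent atTop
      (fun x : ℕ => (((Finset.range (x + 1)).filter
        (fun p => p.Prime ∧ jacobiSym D p = 1)).card : ℝ))
      (fun x : ℕ => (Nat.primeCounting x : ℝ) / 2) := by
  have hratio := (tendsto_card_primesLE_jacobiSym_eq_one_div hD).div_const (1 / 2)
  rw [div_self one_half_pos.ne'] at hratio
  refine isEquivalent_of_tendsto_one (hratio.congr fun N ↦ ?_)
  rw [Nat.primesLE_eq_filter_range, Finset.filter_filter, div_div, mul_one_div, Pi.div_apply]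
end

section
/- For fixed k ≥ 1, the number π_k(x) of squarefree positive integers n ≤ x with exactly k prime factors satisfies π_k(x) ~ x (log log x)^{k-1} / ((k-1)! log x) as x → ∞. -/
open Filter Asymptotics

/-!
The nonvanishing of `ζ` on `Re s = 1` gives `ψ(x) ~ x` by the Wiener–Ikehara theorem, applied to
`b u = ψ(e ^ u) / e ^ u`. The Laplace transform of `b - 1` extends continuously to the imaginary
axis, so by the Riemann–Lebesgue lemma the averages of `b` converge to `1`, for every dilate of a
nonnegative kernel whose Fourier transform is continuous with compact support. As `b u * e ^ u` is
monotone, these averages control `b` itself. Partial summation then yields `∑ 1/p ~ log log x`.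

The passage to `k` prime factors follows Hardy and Wright. Let `L_k(x)` be the sum of `1/m` over
the squarefree `m ≤ x` with `k` prime factors. Removing one prime factor from `n = m p` gives
`(k + 1) L_{k+1}(x) = ∑ (1/m) ∑ 1/p`, so inductively `L_k(x) ~ (log log x)^k / k!`. The same
factorisation with weight `log n = ∑_{p ∣ n} log p` and `θ(y) ~ y` gives `∑ log n ~ x L_k(x)`, the
sum being over squarefree `n ≤ x` with `k + 1` prime factors. Finally `log n` may be replaced by
`log x`, since almost all of these `n` exceed `x^{1-δ}`.
-/

namespace Landau

open MeasureTheory Set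
open scoped Topology FourierTransform ComplexConjugate ContDiff

section Kernel

lemma fourier_star_comp_neg (f : ℝ → ℂ) (u : ℝ) :
    𝓕 (fun x ↦ conj (f (-x))) u = conj (𝓕 f u) := by
  rw [Real.fourier_real_eq_integral_exp_smul, Real.fourier_real_eq_integral_exp_smul,
    ← integral_conj, ← integral_neg_eq_self]
  refine integral_congr_ae (.of_forall fun x ↦ ?_)
  simp only [smul_eq_mul, map_mul, neg_neg, ← Complex.exp_conj, Complex.conj_ofReal,
    Complex.conj_I]
  congr 2
  push_cast
  ring

lemma fourier_comp_div {l : ℝ} (hl : 0 < l) (f : ℝ → ℂ) (u : ℝ) :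
    𝓕 (fun t ↦ f (t / l)) u = l * 𝓕 f (l * u) := by
  have hscale := Measure.integral_comp_div
    (fun t : ℝ ↦ Complex.exp (↑(-2 * Real.pi * t * (l * u)) * Complex.I) • f t) l
  rw [Real.fourier_real_eq_integral_exp_smul, Real.fourier_real_eq_integral_exp_smul]
  rw [abs_of_pos hl, Complex.real_smul] at hscale
  rw [← hscale]
  congr! 6 with t
  field_simp

/-- The autocorrelation of a bump function has Fourier transform `|𝓕 φ| ^ 2`. -/
lemma exists_fourier_eq_nonneg_integrable :
    ∃ k : ℝ → ℂ, ∃ K : ℝ → ℝ, Continuous k ∧ HasCompactSupport k ∧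
      (∀ u, 𝓕 k u = K u) ∧ (∀ u, 0 ≤ K u) ∧ Integrable K ∧ 0 < ∫ u, K u := by
  let φ : ContDiffBump (0 : ℝ) := default
  let f : ℝ → ℂ := fun x ↦ φ x
  let g : ℝ → ℂ := fun x ↦ conj (f (-x))
  have hf : ContDiff ℝ ∞ f := Complex.ofRealCLM.contDiff.comp φ.contDiff
  have hfs : HasCompactSupport f := φ.hasCompactSupport.comp_left Complex.ofReal_zero
  have hgc : Continuous g := by fun_prop
  have hgs : HasCompactSupport g :=
    (hfs.comp_homeomorph (Homeomorph.neg ℝ)).comp_left (map_zero conj)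
  let 𝓯 : SchwartzMap ℝ ℂ := hfs.toSchwartzMap hf
  refine ⟨convolution f g (ContinuousLinearMap.mul ℂ ℂ), fun u ↦ ‖𝓕 f u‖ ^ 2,
    hfs.continuous_convolution_left _ hf.continuous hgc.locallyIntegrable,
    hfs.convolution _ hgs, fun u ↦ ?_, fun u ↦ sq_nonneg _, ?_, ?_⟩
  · rw [Real.fourier_mul_convolution_eq (hf.continuous.integrable_of_hasCompactSupport hfs)
      (hgc.integrable_of_hasCompactSupport hgs), fourier_star_comp_neg, Complex.mul_conj']
    norm_cast
  · have hL2 : MemLp (𝓕 f) 2 volume := (𝓕 𝓯).memLp 2 volume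
    exact hL2.integrable_norm_pow two_ne_zero
  · have hpl : ∫ u, ‖𝓕 f u‖ ^ 2 = ∫ x, ‖f x‖ ^ 2 := 𝓯.integral_norm_sq_fourier
    rw [hpl]
    refine (hf.continuous.norm.pow 2).integral_pos_of_hasCompactSupport_nonneg_nonzero
      (hfs.comp_left (g := fun z ↦ ‖z‖ ^ 2) (by simp)) (fun x ↦ sq_nonneg ‖f x‖) (x := 0) ?_
    simpa [f] using (φ.pos_of_mem_ball (Metric.mem_ball_self φ.rOut_pos)).ne'

end Kernel

section LaplaceBoundary

variable {a : ℝ → ℝ} {C : ℝ} {F : ℂ → ℂ} {k : ℝ → ℂ}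

lemma continuous_apply_sub_mul_I (hF : ContinuousOn F {s | 0 ≤ s.re}) {δ : ℝ} (hδ : 0 ≤ δ) :
    Continuous fun t : ℝ ↦ F (δ - 2 * Real.pi * t * Complex.I) :=
  hF.comp_continuous (by fun_prop) fun t ↦ by simpa using hδ

lemma integral_mul_fourier_mul_exp_eq (ham : Measurable a) (hab : ∀ u, |a u| ≤ C)
    (hLaplace : ∀ s : ℂ, 0 < s.re →
      ∫ u in Ioi (0 : ℝ), (a u : ℂ) * Complex.exp (-(s * u)) = F s)
    (hk : Continuous k) (hks : HasCompactSupport k) {δ : ℝ} (hδ : 0 < δ) (y : ℝ) :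
    ∫ u in Ioi (0 : ℝ), (a u : ℂ) * 𝓕 k (y - u) * Complex.exp (-(δ * u)) =
      𝓕 (fun t ↦ k t * F (δ - 2 * Real.pi * t * Complex.I)) y := by
  have hki : Integrable k := hk.integrable_of_hasCompactSupport hks
  let G : ℝ → ℝ → ℂ := fun u t ↦ Complex.exp (↑(-2 * Real.pi * t * y) * Complex.I) * k t *
    (a u * Complex.exp (-((δ - 2 * Real.pi * t * Complex.I) * u)))
  have hG : Integrable (Function.uncurry G) ((volume.restrict (Ioi 0)).prod volume) := by
    have hbound : Integrable (fun p : ℝ × ℝ ↦ (C * Real.exp (-δ * p.1)) * ‖k p.2‖)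
        ((volume.restrict (Ioi 0)).prod volume) :=
      ((exp_neg_integrableOn_Ioi 0 hδ).const_mul C).mul_prod hki.norm
    refine hbound.mono' (Measurable.aestronglyMeasurable ?_) (.of_forall fun p ↦ ?_)
    · have := hk.measurable
      fun_prop
    · have hre : (-((δ - 2 * Real.pi * p.2 * Complex.I) * p.1)).re = -δ * p.1 := by simp
      simp only [Function.uncurry_def, G]
      rw [norm_mul, norm_mul, Complex.norm_exp_ofReal_mul_I, one_mul, norm_mul, Complex.norm_real,
        Complex.norm_exp, hre, mul_comm]
      gcongr
      exact hab _
  calc ∫ u in Ioi (0 : ℝ), (a u : ℂ) * 𝓕 k (y - u) * Complex.exp (-(δ * u))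
      = ∫ u in Ioi (0 : ℝ), ∫ t, G u t := by
        refine integral_congr_ae (.of_forall fun u ↦ ?_)
        simp only [G, Real.fourier_real_eq_integral_exp_smul]
        rw [mul_right_comm, ← integral_const_mul]
        refine integral_congr_ae (.of_forall fun t ↦ ?_)
        have hexp : Complex.exp (-(δ * u)) *
              Complex.exp (↑(-2 * Real.pi * t * (y - u)) * Complex.I) =
            Complex.exp (↑(-2 * Real.pi * t * y) * Complex.I) *
              Complex.exp (-((δ - 2 * Real.pi * t * Complex.I) * u)) := by
          rw [← Complex.exp_add, ← Complex.exp_add]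
          congr 1
          push_cast
          ring
        linear_combination (norm := (simp only [smul_eq_mul]; ring)) a u * k t * hexp
    _ = ∫ t, ∫ u in Ioi (0 : ℝ), G u t := integral_integral_swap hG
    _ = 𝓕 (fun t ↦ k t * F (δ - 2 * Real.pi * t * Complex.I)) y := by
        rw [Real.fourier_real_eq_integral_exp_smul]
        refine integral_congr_ae (.of_forall fun t ↦ ?_)
        simp only [G]
        rw [integral_const_mul, hLaplace _ (by simpa using hδ), smul_eq_mul, mul_assoc]

lemma tendsto_integral_mul_fourier_mul_exp (ham : Measurable a) (hab : ∀ u, |a u| ≤ C)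
    {f : ℝ → ℂ} (hf : Integrable f) (y : ℝ) :
    Tendsto (fun δ : ℝ ↦ ∫ u in Ioi (0 : ℝ), (a u : ℂ) * f (y - u) * Complex.exp (-(δ * u)))
      (𝓝[>] 0) (𝓝 (∫ u in Ioi (0 : ℝ), (a u : ℂ) * f (y - u))) := by
  have hfy : Integrable (fun u ↦ f (y - u)) := hf.comp_sub_left y
  refine tendsto_integral_filter_of_dominated_convergence (fun u ↦ C * ‖f (y - u)‖)
    (.of_forall fun δ ↦ ?_) ?_ (hfy.norm.const_mul C).restrict (.of_forall fun u ↦ ?_)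
  · exact ((by fun_prop : Measurable fun u ↦ (a u : ℂ)).aestronglyMeasurable.mul
      hfy.1.restrict).mul (by fun_prop : Continuous _).aestronglyMeasurable
  · filter_upwards [self_mem_nhdsWithin] with δ hδ
    filter_upwards [ae_restrict_mem measurableSet_Ioi] with u hu
    have hexp : ‖Complex.exp (-(δ * u))‖ ≤ 1 := by
      rw [Complex.norm_exp, Real.exp_le_one_iff]
      simpa using (mul_pos hδ hu).le
    rw [norm_mul, norm_mul, Complex.norm_real]
    exact mul_le_of_le_one_right (by positivity) hexp |>.trans (by gcongr; exact hab u)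
  · have hlim : ContinuousAt
        (fun δ : ℝ ↦ (a u : ℂ) * f (y - u) * Complex.exp (-(δ * u))) 0 := by fun_prop
    simpa using hlim.tendsto.mono_left nhdsWithin_le_nhds

lemma tendsto_fourier_mul_comp_nhdsGT (hF : ContinuousOn F {s | 0 ≤ s.re})
    (hk : Continuous k) (hks : HasCompactSupport k) (y : ℝ) :
    Tendsto (fun δ : ℝ ↦ 𝓕 (fun t ↦ k t * F (δ - 2 * Real.pi * t * Complex.I)) y)
      (𝓝[>] 0) (𝓝 (𝓕 (fun t ↦ k t * F (-(2 * Real.pi * t * Complex.I))) y)) := by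
  simp only [Real.fourier_real_eq_integral_exp_smul]
  let z : ℝ × ℝ → ℂ := fun p ↦ p.1 - 2 * Real.pi * p.2 * Complex.I
  have hcompact : IsCompact (z '' (Icc 0 1 ×ˢ tsupport k)) :=
    (isCompact_Icc.prod hks).image (by fun_prop)
  obtain ⟨M, hM⟩ := hcompact.exists_bound_of_continuousOn (f := F) <| hF.mono <| by
    rintro _ ⟨⟨d, t⟩, ⟨hd, -⟩, rfl⟩
    simpa [z] using hd.1
  refine tendsto_integral_filter_of_dominated_convergence (fun t ↦ ‖k t‖ * M) ?_ ?_
    ((hk.integrable_of_hasCompactSupport hks).norm.mul_const M) (.of_forall fun t ↦ ?_)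
  · filter_upwards [self_mem_nhdsWithin] with δ hδ
    refine Continuous.aestronglyMeasurable <| Continuous.fun_smul ?_ <|
      hk.fun_mul (continuous_apply_sub_mul_I hF (le_of_lt hδ))
    fun_prop
  · filter_upwards [Ioc_mem_nhdsGT one_pos] with δ hδ
    refine .of_forall fun t ↦ ?_
    rw [norm_smul, Complex.norm_exp_ofReal_mul_I, one_mul, norm_mul]
    by_cases ht : t ∈ tsupport k
    · gcongr
      exact hM _ ⟨(δ, t), ⟨⟨hδ.1.le, hδ.2⟩, ht⟩, rfl⟩
    · simp [image_eq_zero_of_notMem_tsupport ht]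
  · have hz : Tendsto (fun δ : ℝ ↦ z (δ, t)) (𝓝[>] 0) (𝓝[{s | 0 ≤ s.re}] z (0, t)) := by
      refine tendsto_nhdsWithin_iff.mpr ⟨?_, ?_⟩
      · exact (by fun_prop : ContinuousAt (fun δ : ℝ ↦ z (δ, t)) 0).mono_left nhdsWithin_le_nhds
      · filter_upwards [self_mem_nhdsWithin] with δ hδ
        simpa [z] using le_of_lt hδ
    have hFz := (hF (z (0, t)) (by simp [z])).tendsto.comp hz
    simpa [z] using (hFz.const_mul (k t)).const_mul
      (Complex.exp (↑(-2 * Real.pi * t * y) * Complex.I))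

/-- Letting the real part of the Laplace variable tend to `0` turns the convolution of `a` with
`𝓕 k` into a Fourier transform, to which the Riemann–Lebesgue lemma applies. -/
lemma tendsto_integral_mul_fourier (ham : Measurable a) (hab : ∀ u, |a u| ≤ C)
    (hF : ContinuousOn F {s | 0 ≤ s.re})
    (hLaplace : ∀ s : ℂ, 0 < s.re →
      ∫ u in Ioi (0 : ℝ), (a u : ℂ) * Complex.exp (-(s * u)) = F s)
    (hk : Continuous k) (hks : HasCompactSupport k) (hki : Integrable (𝓕 k)) :
    Tendsto (fun y ↦ ∫ u in Ioi (0 : ℝ), (a u : ℂ) * 𝓕 k (y - u)) atTop (𝓝 0) := by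
  have hfourier (y : ℝ) : 𝓕 (fun t ↦ k t * F (-(2 * Real.pi * t * Complex.I))) y =
      ∫ u in Ioi (0 : ℝ), (a u : ℂ) * 𝓕 k (y - u) := by
    refine tendsto_nhds_unique (tendsto_fourier_mul_comp_nhdsGT hF hk hks y)
      ((tendsto_integral_mul_fourier_mul_exp ham hab hki y).congr' ?_)
    filter_upwards [self_mem_nhdsWithin] with δ hδ
    exact integral_mul_fourier_mul_exp_eq ham hab hLaplace hk hks hδ y
  exact ((Real.zero_at_infty_fourier _).mono_left atTop_le_cocompact).congr hfourier

end LaplaceBoundary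

section Tauberian

variable {b K : ℝ → ℝ} {A C c h y : ℝ}

lemma integrable_mul_comp_sub (hbm : Measurable b) (hbC : ∀ u, |b u| ≤ C) (hK : Integrable K)
    (y : ℝ) : Integrable fun u ↦ b u * K (y - u) :=
  (hK.comp_sub_left y).bdd_mul hbm.aestronglyMeasurable (.of_forall hbC)

lemma setIntegral_Icc_comp_sub (hh : 0 ≤ h) (K : ℝ → ℝ) (y : ℝ) :
    ∫ u in Icc (y - h) (y + h), K (y - u) = ∫ v in Icc (-h) h, K v := by
  rw [integral_Icc_eq_integral_Ioc, integral_Icc_eq_integral_Ioc,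
    ← intervalIntegral.integral_of_le (by linarith),
    ← intervalIntegral.integral_of_le (by linarith), intervalIntegral.integral_comp_sub_left]
  ring_nf

lemma mul_setIntegral_Icc_le_convolution (hb : ∀ u, 0 ≤ b u) (hbm : Measurable b)
    (hbC : ∀ u, |b u| ≤ C) (hK : Integrable K) (hK0 : ∀ u, 0 ≤ K u) (hh : 0 ≤ h) (hy : h < y)
    (hc : ∀ u ∈ Icc (y - h) (y + h), c ≤ b u) :
    c * ∫ v in Icc (-h) h, K v ≤ ∫ u in Ioi 0, b u * K (y - u) := by
  have hbK := integrable_mul_comp_sub hbm hbC hK y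
  calc c * ∫ v in Icc (-h) h, K v
      = ∫ u in Icc (y - h) (y + h), c * K (y - u) := by
        rw [integral_const_mul, setIntegral_Icc_comp_sub hh]
    _ ≤ ∫ u in Icc (y - h) (y + h), b u * K (y - u) :=
        setIntegral_mono_on ((hK.comp_sub_left y).const_mul c).integrableOn hbK.integrableOn
          measurableSet_Icc fun u hu ↦ mul_le_mul_of_nonneg_right (hc u hu) (hK0 _)
    _ ≤ ∫ u in Ioi 0, b u * K (y - u) :=
        setIntegral_mono_set hbK.integrableOn (.of_forall fun u ↦ mul_nonneg (hb u) (hK0 _))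
          (Eventually.of_forall fun u hu ↦ (sub_pos.mpr hy).trans_le hu.1)

lemma convolution_le_mul_setIntegral_Icc_add (hb : ∀ u, 0 ≤ b u) (hbm : Measurable b)
    (hbC : ∀ u, |b u| ≤ C) (hK : Integrable K) (hK0 : ∀ u, 0 ≤ K u) (hh : 0 ≤ h)
    (hc : ∀ u ∈ Icc (y - h) (y + h), b u ≤ c) :
    ∫ u in Ioi 0, b u * K (y - u) ≤
      c * (∫ v in Icc (-h) h, K v) + C * ((∫ v, K v) - ∫ v in Icc (-h) h, K v) := by
  have hbK := integrable_mul_comp_sub hbm hbC hK y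
  have hKy := hK.comp_sub_left y
  have hcompl : ∫ u in (Icc (y - h) (y + h))ᶜ, K (y - u) =
      (∫ v, K v) - ∫ v in Icc (-h) h, K v := by
    rw [← integral_sub_left_eq_self K volume y, ← integral_add_compl measurableSet_Icc hKy,
      setIntegral_Icc_comp_sub hh, add_sub_cancel_left]
  calc ∫ u in Ioi 0, b u * K (y - u)
      ≤ ∫ u, b u * K (y - u) :=
        setIntegral_le_integral hbK (.of_forall fun u ↦ mul_nonneg (hb u) (hK0 _))
    _ = (∫ u in Icc (y - h) (y + h), b u * K (y - u)) +
          ∫ u in (Icc (y - h) (y + h))ᶜ, b u * K (y - u) :=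
        (integral_add_compl measurableSet_Icc hbK).symm
    _ ≤ (∫ u in Icc (y - h) (y + h), c * K (y - u)) +
          ∫ u in (Icc (y - h) (y + h))ᶜ, C * K (y - u) := by
        refine add_le_add (setIntegral_mono_on hbK.integrableOn (hKy.const_mul c).integrableOn
          measurableSet_Icc fun u hu ↦ mul_le_mul_of_nonneg_right (hc u hu) (hK0 _))
          (setIntegral_mono hbK.integrableOn (hKy.const_mul C).integrableOn fun u ↦ ?_)
        exact mul_le_mul_of_nonneg_right ((le_abs_self _).trans (hbC u)) (hK0 _)
    _ = c * (∫ v in Icc (-h) h, K v) + C * ((∫ v, K v) - ∫ v in Icc (-h) h, K v) := by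
        rw [integral_const_mul, integral_const_mul, setIntegral_Icc_comp_sub hh, hcompl]

lemma tendsto_setIntegral_Ioi_comp_sub (hK : Integrable K) :
    Tendsto (fun y ↦ ∫ u in Ioi 0, K (y - u)) atTop (𝓝 (∫ v, K v)) := by
  have hreflect (y : ℝ) : ∫ u in Ioi 0, K (y - u) = ∫ v in Iio y, K v := by
    rw [← integral_indicator measurableSet_Iio, ← integral_sub_left_eq_self _ volume y,
      ← integral_indicator measurableSet_Ioi]
    simp [indicator]
  simp only [hreflect]
  exact (aecover_Iio tendsto_id).integral_tendsto_of_countably_generated hK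

lemma tendsto_setIntegral_Icc_mul_comp_mul (hK : Integrable K) :
    Tendsto (fun h ↦ ∫ v in Icc (-h) h, (h ^ 2)⁻¹ * K ((h ^ 2)⁻¹ * v)) (𝓝[>] 0)
      (𝓝 (∫ v, K v)) := by
  have hlim : Tendsto (fun h : ℝ ↦ ∫ v in Icc (-h⁻¹) h⁻¹, K v) (𝓝[>] 0) (𝓝 (∫ v, K v)) :=
    (aecover_Icc (tendsto_neg_atTop_atBot.comp tendsto_inv_nhdsGT_zero)
      tendsto_inv_nhdsGT_zero).integral_tendsto_of_countably_generated hK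
  refine hlim.congr' ?_
  filter_upwards [self_mem_nhdsWithin] with h (hh : 0 < h)
  rw [integral_Icc_eq_integral_Ioc, integral_Icc_eq_integral_Ioc,
    ← intervalIntegral.integral_of_le (neg_le_self hh.le),
    ← intervalIntegral.integral_of_le (neg_le_self (inv_pos.mpr hh).le),
    intervalIntegral.integral_const_mul, ← smul_eq_mul,
    intervalIntegral.smul_integral_comp_mul_left]
  congr 1 <;> field_simp

lemma mul_exp_le_mul_exp_of_monotone (hb : ∀ u, 0 ≤ b u) (hmono : Monotone fun u ↦ b u * Real.exp u)
    {u v : ℝ} (huv : u ≤ v) (hvu : v - u ≤ c) : b u ≤ b v * Real.exp c := by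
  calc b u = b u * Real.exp u * Real.exp (-u) := by
        rw [mul_assoc, ← Real.exp_add, add_neg_cancel, Real.exp_zero, mul_one]
    _ ≤ b v * Real.exp v * Real.exp (-u) := by gcongr ?_ * _; exact hmono huv
    _ = b v * Real.exp (v - u) := by rw [mul_assoc, ← Real.exp_add, sub_eq_add_neg]
    _ ≤ b v * Real.exp c := by gcongr; exact hb v

lemma integral_mul_comp_mul {l : ℝ} (hl : 0 < l) (K : ℝ → ℝ) :
    ∫ v, l * K (l * v) = ∫ v, K v := by
  rw [integral_const_mul, Measure.integral_comp_mul_left, abs_of_pos (inv_pos.mpr hl),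
    smul_eq_mul, mul_inv_cancel_left₀ hl.ne']

lemma tendsto_exp_two_mul_nhdsGT : Tendsto (fun h : ℝ ↦ Real.exp (2 * h)) (𝓝[>] 0) (𝓝 1) := by
  have hcont : ContinuousAt (fun h : ℝ ↦ Real.exp (2 * h)) 0 := by fun_prop
  simpa using hcont.tendsto.mono_left nhdsWithin_le_nhds

lemma tendsto_of_tendsto_bounds {α ι : Type*} {l : Filter α} {p : Filter ι} [p.NeBot]
    {f : α → ℝ} {lower upper : ι → α → ℝ} {L U : ι → ℝ}
    (hlower : ∀ᶠ i in p, (lower i ≤ᶠ[l] f) ∧ Tendsto (lower i) l (𝓝 (L i)))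
    (hupper : ∀ᶠ i in p, (f ≤ᶠ[l] upper i) ∧ Tendsto (upper i) l (𝓝 (U i)))
    (hL : Tendsto L p (𝓝 A)) (hU : Tendsto U p (𝓝 A)) : Tendsto f l (𝓝 A) := by
  refine tendsto_order.mpr ⟨fun A' hA' ↦ ?_, fun A' hA' ↦ ?_⟩
  · obtain ⟨i, ⟨hle, hlim⟩, hi⟩ := (hlower.and (hL.eventually_const_lt hA')).exists
    filter_upwards [hle, hlim.eventually_const_lt hi] with x hx hx' using hx'.trans_le hx
  · obtain ⟨i, ⟨hle, hlim⟩, hi⟩ := (hupper.and (hU.eventually_lt_const hA')).exists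
    filter_upwards [hle, hlim.eventually_lt_const hi] with x hx hx' using hx.trans_lt hx'

lemma convolution_sub_le_mul_exp (hb : ∀ u, 0 ≤ b u) (hbm : Measurable b) (hbC : ∀ u, |b u| ≤ C)
    (hmono : Monotone fun u ↦ b u * Real.exp u) (hK : Integrable K) (hK0 : ∀ u, 0 ≤ K u)
    (hh : 0 ≤ h) :
    (∫ u in Ioi 0, b u * K (y - h - u)) - C * ((∫ v, K v) - ∫ v in Icc (-h) h, K v) ≤
      b y * (Real.exp (2 * h) * ∫ v in Icc (-h) h, K v) := by
  rw [sub_le_iff_le_add, ← mul_assoc]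
  exact convolution_le_mul_setIntegral_Icc_add hb hbm hbC hK hK0 hh fun u hu ↦
    mul_exp_le_mul_exp_of_monotone hb hmono (by linarith [hu.2]) (by linarith [hu.1])

lemma mul_setIntegral_Icc_le_convolution_mul_exp (hb : ∀ u, 0 ≤ b u) (hbm : Measurable b)
    (hbC : ∀ u, |b u| ≤ C) (hmono : Monotone fun u ↦ b u * Real.exp u) (hK : Integrable K)
    (hK0 : ∀ u, 0 ≤ K u) (hh : 0 ≤ h) (hy : 0 < y) :
    b y * (∫ v in Icc (-h) h, K v) ≤ (∫ u in Ioi 0, b u * K (y + h - u)) * Real.exp (2 * h) := by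
  have hwindow : ∀ u ∈ Icc (y + h - h) (y + h + h), b y * Real.exp (-(2 * h)) ≤ b u :=
    fun u hu ↦ by
      rw [Real.exp_neg, ← div_eq_mul_inv, div_le_iff₀ (Real.exp_pos _)]
      exact mul_exp_le_mul_exp_of_monotone hb hmono (by linarith [hu.1]) (by linarith [hu.2])
  have hlower := mul_setIntegral_Icc_le_convolution hb hbm hbC hK hK0 hh (by linarith) hwindow
  rwa [Real.exp_neg, mul_right_comm, ← div_eq_mul_inv, div_le_iff₀ (Real.exp_pos _)] at hlower

/-- A Wiener-type Tauberian theorem: a bounded function whose decay is at most exponential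
inherits the limit of its averages against all dilates of one nonnegative kernel. -/
lemma tendsto_of_tendsto_convolution (hb : ∀ u, 0 ≤ b u) (hbm : Measurable b)
    (hbC : ∀ u, |b u| ≤ C) (hmono : Monotone fun u ↦ b u * Real.exp u)
    (hK : Integrable K) (hK0 : ∀ u, 0 ≤ K u) (hKpos : 0 < ∫ v, K v)
    (hconv : ∀ l > 0, Tendsto (fun y ↦ ∫ u in Ioi 0, b u * (l * K (l * (y - u)))) atTop
      (𝓝 (A * ∫ v, K v))) :
    Tendsto b atTop (𝓝 A) := by
  let I := ∫ v, K v
  let Kₕ : ℝ → ℝ → ℝ := fun h v ↦ (h ^ 2)⁻¹ * K ((h ^ 2)⁻¹ * v)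
  let G : ℝ → ℝ → ℝ := fun h y ↦ ∫ u in Ioi 0, b u * Kₕ h (y - u)
  let m : ℝ → ℝ := fun h ↦ ∫ v in Icc (-h) h, Kₕ h v
  have hI : I ≠ 0 := hKpos.ne'
  have hm : Tendsto m (𝓝[>] 0) (𝓝 I) := tendsto_setIntegral_Icc_mul_comp_mul hK
  have hexp := tendsto_exp_two_mul_nhdsGT
  have hKₕ {h : ℝ} (hh : 0 < h) : Integrable (Kₕ h) ∧ (∀ v, 0 ≤ Kₕ h v) ∧ ∫ v, Kₕ h v = I := by
    have hl : 0 < (h ^ 2)⁻¹ := by positivity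
    exact ⟨(hK.comp_mul_left' hl.ne').const_mul _, fun v ↦ mul_nonneg hl.le (hK0 _),
      integral_mul_comp_mul hl K⟩
  have hG {h : ℝ} (hh : 0 < h) (c : ℝ) : Tendsto (fun y ↦ G h (y + c)) atTop (𝓝 (A * I)) :=
    (hconv _ (inv_pos.mpr (pow_pos hh 2))).comp (tendsto_atTop_add_const_right _ c tendsto_id)
  have hpos : ∀ᶠ h in 𝓝[>] 0, 0 < h ∧ 0 < m h :=
    Eventually.and self_mem_nhdsWithin (hm.eventually_const_lt hKpos)
  refine tendsto_of_tendsto_bounds (p := 𝓝[>] (0 : ℝ))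
    (lower := fun h y ↦ (G h (y + -h) - C * (I - m h)) / (Real.exp (2 * h) * m h))
    (upper := fun h y ↦ G h (y + h) * Real.exp (2 * h) / m h)
    (L := fun h ↦ (A * I - C * (I - m h)) / (Real.exp (2 * h) * m h))
    (U := fun h ↦ A * I * Real.exp (2 * h) / m h) ?_ ?_ ?_ ?_
  · filter_upwards [hpos] with h ⟨hh, hmh⟩
    obtain ⟨hKi, hKnn, hKI⟩ := hKₕ hh
    refine ⟨.of_forall fun y ↦ (div_le_iff₀ (by positivity)).mpr ?_,
      ((hG hh (-h)).sub_const _).div_const _⟩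
    rw [← hKI, ← sub_eq_add_neg]
    exact convolution_sub_le_mul_exp hb hbm hbC hmono hKi hKnn hh.le
  · filter_upwards [hpos] with h ⟨hh, hmh⟩
    obtain ⟨hKi, hKnn, -⟩ := hKₕ hh
    refine ⟨?_, ((hG hh h).mul_const _).div_const _⟩
    filter_upwards [eventually_gt_atTop 0] with y hy
    exact (le_div_iff₀ hmh).mpr
      (mul_setIntegral_Icc_le_convolution_mul_exp hb hbm hbC hmono hKi hKnn hh.le hy)
  · simpa [hI, Pi.div_def] using
      (((hm.const_sub I).const_mul C).const_sub (A * I)).div (hexp.mul hm) (by simpa using hI)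
  · simpa [hI, Pi.div_def] using (hexp.const_mul (A * I)).div hm hI

/-- The Wiener–Ikehara theorem, in logarithmic scale. -/
theorem tendsto_of_laplace_continuousOn {F : ℂ → ℂ} (hb : ∀ u, 0 ≤ b u)
    (hbC : ∀ u, |b u| ≤ C) (hmono : Monotone fun u ↦ b u * Real.exp u)
    (hF : ContinuousOn F {s | 0 ≤ s.re})
    (hLaplace : ∀ s : ℂ, 0 < s.re →
      ∫ u in Ioi (0 : ℝ), ((b u - A : ℝ) : ℂ) * Complex.exp (-(s * u)) = F s) :
    Tendsto b atTop (𝓝 A) := by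
  obtain ⟨k, K, hk, hks, hkK, hK0, hK, hKpos⟩ := exists_fourier_eq_nonneg_integrable
  have hbm : Measurable b := by
    have hb_eq : b = fun u ↦ b u * Real.exp u * Real.exp (-u) := by
      ext u
      rw [mul_assoc, ← Real.exp_add, add_neg_cancel, Real.exp_zero, mul_one]
    rw [hb_eq]
    exact hmono.measurable.mul (by fun_prop)
  have hbA (u : ℝ) : |b u - A| ≤ C + |A| := (abs_sub _ _).trans (by gcongr; exact hbC u)
  refine tendsto_of_tendsto_convolution hb hbm hbC hmono hK hK0 hKpos fun l hl ↦ ?_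
  have hKl : Integrable fun v ↦ l * K (l * v) := (hK.comp_mul_left' hl.ne').const_mul l
  have hfourier : 𝓕 (fun t ↦ k (t / l)) = fun u ↦ ((l * K (l * u) : ℝ) : ℂ) := by
    ext u
    rw [fourier_comp_div hl, hkK, Complex.ofReal_mul]
  have hzero := tendsto_integral_mul_fourier (hbm.sub_const A) hbA hF hLaplace
    (k := fun t ↦ k (t / l)) (by fun_prop)
    (hks.comp_homeomorph (Homeomorph.mulRight₀ l⁻¹ (inv_ne_zero hl.ne')))
    (by rw [hfourier]; exact hKl.ofReal)
  have hzero_re :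
      Tendsto (fun y ↦ ∫ u in Ioi 0, (b u - A) * (l * K (l * (y - u)))) atTop (𝓝 0) := by
    simp only [hfourier, ← Complex.ofReal_mul, integral_complex_ofReal] at hzero
    exact tendsto_ofReal_iff.mp (by simpa using hzero)
  have hmass := (tendsto_setIntegral_Ioi_comp_sub hKl).const_mul A
  rw [integral_mul_comp_mul hl] at hmass
  rw [← zero_add (A * _)]
  refine (hzero_re.add hmass).congr fun y ↦ ?_
  rw [← integral_const_mul, ← integral_add]
  · congr! 2 with u
    ring
  · exact (integrable_mul_comp_sub (hbm.sub_const A) hbA hKl y).integrableOn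
  · exact ((hKl.comp_sub_left y).const_mul A).integrableOn

end Tauberian

section WienerIkehara

variable {f : ℕ → ℝ} {C : ℝ}

lemma one_add_ne_zero_of_re_nonneg {z : ℂ} (hz : 0 ≤ z.re) : 1 + z ≠ 0 := fun h ↦ by
  have hre := congrArg Complex.re h
  simp only [Complex.add_re, Complex.one_re, Complex.zero_re] at hre
  linarith

lemma integral_sub_const_mul_exp_neg {b : ℝ → ℝ} (hbm : Measurable b) (hbC : ∀ u, |b u| ≤ C)
    (A : ℝ) {z : ℂ} (hz : 0 < z.re) :
    ∫ u in Ioi (0 : ℝ), ((b u - A : ℝ) : ℂ) * Complex.exp (-(z * u)) =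
      (∫ u in Ioi (0 : ℝ), (b u : ℂ) * Complex.exp (-(z * u))) - A / z := by
  have hre : (-z).re < 0 := by simpa using hz
  have hexp : IntegrableOn (fun u : ℝ ↦ Complex.exp (-(z * u))) (Ioi 0) := by
    simpa only [neg_mul] using integrableOn_exp_mul_complex_Ioi hre 0
  have hexp_integral : ∫ u in Ioi (0 : ℝ), Complex.exp (-(z * u)) = 1 / z := by
    simpa using integral_exp_mul_complex_Ioi hre 0
  have hbexp : IntegrableOn (fun u : ℝ ↦ (b u : ℂ) * Complex.exp (-(z * u))) (Ioi 0) :=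
    hexp.bdd_mul (c := C) (by fun_prop) (.of_forall fun u ↦ by simpa using hbC u)
  simp only [Complex.ofReal_sub, sub_mul]
  rw [integral_sub hbexp (hexp.const_mul _), integral_const_mul, hexp_integral, mul_one_div]

lemma ofReal_exp_cpow (u : ℝ) (z : ℂ) : ((Real.exp u : ℝ) : ℂ) ^ z = Complex.exp (u * z) := by
  rw [Complex.cpow_def_of_ne_zero (Complex.ofReal_ne_zero.mpr (Real.exp_pos u).ne'),
    ← Complex.ofReal_log (Real.exp_pos u).le, Real.log_exp]

lemma integral_sum_exp_mul_exp_neg (hf : ∀ n, 0 ≤ f n)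
    (hfC : ∀ n : ℕ, ∑ k ∈ Finset.Icc 1 n, f k ≤ C * n) {z : ℂ} (hz : 0 < z.re) :
    ∫ u in Ioi (0 : ℝ), (((∑ n ∈ Finset.Icc 1 ⌊Real.exp u⌋₊, f n) * Real.exp (-u) : ℝ) : ℂ) *
        Complex.exp (-(z * u)) = LSeries (fun n ↦ (f n : ℂ)) (1 + z) / (1 + z) := by
  have hO : (fun n : ℕ ↦ ∑ k ∈ Finset.Icc 1 n, f k) =O[atTop] fun n ↦ (n : ℝ) ^ (1 : ℝ) := by
    refine .of_bound C (.of_forall fun n ↦ ?_)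
    rw [Real.rpow_one, Real.norm_of_nonneg (Finset.sum_nonneg fun _ _ ↦ hf _),
      Real.norm_of_nonneg n.cast_nonneg]
    exact hfC n
  rw [LSeries_eq_mul_integral_of_nonneg f zero_le_one (by simpa using hz) hO hf,
    mul_div_cancel_left₀ _ (one_add_ne_zero_of_re_nonneg hz.le), ← Real.exp_zero,
    ← integral_comp_exp_Ioi]
  refine setIntegral_congr_fun measurableSet_Ioi fun u _ ↦ ?_
  have hexp : Complex.exp (-u) * Complex.exp (-(z * u)) =
      Complex.exp u * Complex.exp u ^ (-(1 + z + 1)) := by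
    rw [← Complex.ofReal_exp u, ofReal_exp_cpow, Complex.ofReal_exp, ← Complex.exp_add,
      ← Complex.exp_add]
    congr 1
    ring
  simp only [Complex.real_smul]
  push_cast
  linear_combination (∑ n ∈ Finset.Icc 1 ⌊Real.exp u⌋₊, (f n : ℂ)) * hexp

/-- The Wiener–Ikehara theorem. -/
theorem tendsto_sum_div_of_LSeries {A : ℝ} {G : ℂ → ℂ} (hf : ∀ n, 0 ≤ f n)
    (hfC : ∀ n : ℕ, ∑ k ∈ Finset.Icc 1 n, f k ≤ C * n) (hG : ContinuousOn G {s | 1 ≤ s.re})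
    (hGf : EqOn G (fun s ↦ LSeries (fun n ↦ (f n : ℂ)) s - A / (s - 1)) {s | 1 < s.re}) :
    Tendsto (fun x ↦ (∑ n ∈ Finset.Icc 1 ⌊x⌋₊, f n) / x) atTop (𝓝 A) := by
  let b : ℝ → ℝ := fun u ↦ (∑ n ∈ Finset.Icc 1 ⌊Real.exp u⌋₊, f n) * Real.exp (-u)
  have hb (u : ℝ) : 0 ≤ b u := mul_nonneg (Finset.sum_nonneg fun _ _ ↦ hf _) (Real.exp_pos _).le
  have hb_mul_exp (u : ℝ) : b u * Real.exp u = ∑ n ∈ Finset.Icc 1 ⌊Real.exp u⌋₊, f n := by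
    rw [mul_assoc, ← Real.exp_add, neg_add_cancel, Real.exp_zero, mul_one]
  have hC : 0 ≤ C := by simpa using (Finset.sum_nonneg fun _ _ ↦ hf _).trans (hfC 1)
  have hbC (u : ℝ) : |b u| ≤ C := by
    rw [abs_of_nonneg (hb u), ← mul_le_mul_iff_of_pos_right (Real.exp_pos u), hb_mul_exp]
    exact (hfC _).trans (by gcongr; exact Nat.floor_le (Real.exp_pos u).le)
  have hmono : Monotone fun u ↦ b u * Real.exp u := fun u v huv ↦ by
    simp only [hb_mul_exp]
    gcongr
    exact fun n _ _ ↦ hf n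
  have hF : ContinuousOn (fun z ↦ (G (1 + z) - A) / (1 + z)) {z | 0 ≤ z.re} :=
    ((hG.comp (by fun_prop) fun z hz ↦ by simpa using hz).sub continuousOn_const).div
      (by fun_prop) fun z hz ↦ one_add_ne_zero_of_re_nonneg hz
  have hlim : Tendsto b atTop (𝓝 A) :=
    tendsto_of_laplace_continuousOn hb hbC hmono hF fun z hz ↦ ?_
  · refine (hlim.comp Real.tendsto_log_atTop).congr' ?_
    filter_upwards [eventually_gt_atTop 0] with x hx
    simp only [b, Function.comp_apply, Real.exp_neg, Real.exp_log hx, div_eq_mul_inv]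
  · have hbm : Measurable b := by fun_prop
    have hz0 : z ≠ 0 := by rintro rfl; simp at hz
    have hz1 := one_add_ne_zero_of_re_nonneg hz.le
    rw [integral_sub_const_mul_exp_neg hbm hbC A hz, integral_sum_exp_mul_exp_neg hf hfC hz,
      hGf (by simpa using hz)]
    simp only [add_sub_cancel_left]
    field_simp
    ring

end WienerIkehara

section PrimeNumberTheorem

open ArithmeticFunction

theorem psi_isEquivalent : Chebyshev.psi ~[atTop] id := by
  have hΛ : vonMangoldt.residueClass (1 : ZMod 1) = vonMangoldt := by
    ext n
    simp [vonMangoldt.residueClass, indicator, Subsingleton.elim (n : ZMod 1) 1]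
  have hpsi_le (n : ℕ) : ∑ k ∈ Finset.Icc 1 n, vonMangoldt k ≤ (Real.log 4 + 4) * n := by
    have h := Chebyshev.psi_le_const_mul_self n.cast_nonneg
    rwa [Chebyshev.psi, Nat.floor_natCast] at h
  have hL := vonMangoldt.eqOn_LFunctionResidueClassAux (q := 1) isUnit_one
  rw [hΛ] at hL
  refine (isEquivalent_iff_tendsto_one ?_).mpr
    (tendsto_sum_div_of_LSeries (fun n ↦ vonMangoldt_nonneg) hpsi_le
      (vonMangoldt.continuousOn_LFunctionResidueClassAux 1) (by simpa using hL))
  filter_upwards [eventually_ne_atTop 0] with x hx using hx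

theorem theta_isEquivalent : Chebyshev.theta ~[atTop] id := by
  have hsqrt : (fun x ↦ √x) =o[atTop] (id : ℝ → ℝ) := by
    have hdom : ∀ᶠ x : ℝ in atTop, id x = 0 → √x = 0 := by
      filter_upwards with x hx using by simp_all
    refine (isLittleO_iff_tendsto' hdom).mpr
      ((tendsto_inv_atTop_zero.comp Real.tendsto_sqrt_atTop).congr fun x ↦ ?_)
    simp only [Function.comp_apply, id_eq, Real.sqrt_div_self', one_div]
  have hsub : (Chebyshev.psi - Chebyshev.theta) =o[atTop] (id : ℝ → ℝ) :=
    Chebyshev.isBigO_psi_sub_theta_sqrt.trans_isLittleO hsqrt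
  simpa using psi_isEquivalent.sub_isLittleO hsub

theorem primeCounting_isEquivalent :
    (fun x : ℝ ↦ (Nat.primeCounting ⌊x⌋₊ : ℝ)) ~[atTop] fun x ↦ x / Real.log x := by
  have hmain : (fun x ↦ Chebyshev.theta x / Real.log x) ~[atTop] fun x ↦ x / Real.log x :=
    theta_isEquivalent.div .refl
  refine (hmain.add_isLittleO Chebyshev.integral_theta_div_log_sq_isLittleO).congr_left ?_
  filter_upwards [eventually_ge_atTop 2] with x hx
  exact (Chebyshev.primeCounting_eq_theta_div_log_add_integral hx).symm

end PrimeNumberTheorem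

section Mertens

lemma isLittleO_intervalIntegral {E : Type*} [NormedAddCommGroup E] [NormedSpace ℝ E]
    {f : ℝ → E} {g : ℝ → ℝ} {a : ℝ} (hfg : f =o[atTop] g)
    (hf : ∀ x, a ≤ x → IntervalIntegrable f volume a x)
    (hg : ∀ x, a ≤ x → IntervalIntegrable g volume a x) (hg0 : ∀ x, a ≤ x → 0 ≤ g x)
    (hlim : Tendsto (fun x ↦ ∫ t in a..x, g t) atTop atTop) :
    (fun x ↦ ∫ t in a..x, f t) =o[atTop] fun x ↦ ∫ t in a..x, g t := by
  refine isLittleO_iff.mpr fun ε hε ↦ ?_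
  obtain ⟨A, hA⟩ := ((hfg.bound (half_pos hε)).and (eventually_ge_atTop a)).exists_forall_of_atTop
  have haA : a ≤ A := (hA A le_rfl).2
  filter_upwards [eventually_ge_atTop A,
    hlim.eventually_ge_atTop (‖∫ t in a..A, f t‖ / (ε / 2))] with x hx hhead
  have hax : a ≤ x := haA.trans hx
  have hsub : uIcc A x ⊆ uIcc a x := by
    rw [uIcc_of_le hx, uIcc_of_le hax]
    exact Icc_subset_Icc_left haA
  have hgA : IntervalIntegrable g volume A x := (hg x hax).mono_set hsub
  have htail : ‖∫ t in A..x, f t‖ ≤ ε / 2 * ∫ t in a..x, g t := calc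
    ‖∫ t in A..x, f t‖ ≤ ∫ t in A..x, ε / 2 * g t := by
      refine intervalIntegral.norm_integral_le_of_norm_le hx (.of_forall fun t ht ↦ ?_)
        (hgA.const_mul _)
      simpa [abs_of_nonneg (hg0 t (haA.trans ht.1.le))] using (hA t ht.1.le).1
    _ = ε / 2 * ∫ t in A..x, g t := intervalIntegral.integral_const_mul _ _
    _ ≤ ε / 2 * ∫ t in a..x, g t := by
      rw [← intervalIntegral.integral_add_adjacent_intervals (hg A haA) hgA]
      gcongr
      exact le_add_of_nonneg_left
        (intervalIntegral.integral_nonneg haA fun t ht ↦ hg0 t ht.1)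
  rw [div_le_iff₀ (half_pos hε)] at hhead
  rw [← intervalIntegral.integral_add_adjacent_intervals (hf A haA) ((hf x hax).mono_set hsub),
    Real.norm_of_nonneg (intervalIntegral.integral_nonneg hax fun t ht ↦ hg0 t ht.1)]
  linarith [norm_add_le (∫ t in a..A, f t) (∫ t in A..x, f t)]

lemma isEquivalent_intervalIntegral {f g : ℝ → ℝ} {a : ℝ} (hfg : f ~[atTop] g)
    (hf : ∀ x, a ≤ x → IntervalIntegrable f volume a x)
    (hg : ∀ x, a ≤ x → IntervalIntegrable g volume a x) (hg0 : ∀ x, a ≤ x → 0 ≤ g x)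
    (hlim : Tendsto (fun x ↦ ∫ t in a..x, g t) atTop atTop) :
    (fun x ↦ ∫ t in a..x, f t) ~[atTop] fun x ↦ ∫ t in a..x, g t := by
  refine (isLittleO_intervalIntegral hfg.isLittleO (fun x hx ↦ (hf x hx).sub (hg x hx))
    hg hg0 hlim).congr' ?_ .rfl
  filter_upwards [eventually_ge_atTop a] with x hx
  exact intervalIntegral.integral_sub (hf x hx) (hg x hx)

/-- The sum of the reciprocals of the primes `p ≤ x`. -/
noncomputable def primeInvSum (x : ℝ) : ℝ := ∑ p ∈ Nat.primesLE ⌊x⌋₊, (p : ℝ)⁻¹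

lemma primeCounting_eq_sum_indicator (n : ℕ) :
    (Nat.primeCounting n : ℝ) = ∑ k ∈ Finset.Icc 0 n, if k.Prime then (1 : ℝ) else 0 := by
  rw [← Nat.primesLE_card_eq_primeCounting, Nat.primesLE_eq_filter_Icc_zero, Finset.sum_boole]

lemma primeCounting_floor_le {x : ℝ} (hx : 0 ≤ x) : (Nat.primeCounting ⌊x⌋₊ : ℝ) ≤ x := by
  refine le_trans ?_ (Nat.floor_le hx)
  rw [← Nat.primesLE_card_eq_primeCounting, Nat.primesLE_eq_filter_Ioc_zero, Nat.cast_le]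
  simpa using Finset.card_filter_le (Finset.Ioc 0 ⌊x⌋₊) Nat.Prime

lemma intervalIntegrable_primeCounting_div_sq {x : ℝ} (hx : 2 ≤ x) :
    IntervalIntegrable (fun t : ℝ ↦ (Nat.primeCounting ⌊t⌋₊ : ℝ) / t ^ 2) volume 2 x := by
  have hcont : ContinuousOn (fun t : ℝ ↦ (t ^ 2)⁻¹) (Icc 2 x) :=
    .inv₀ (by fun_prop) fun t ht ↦ pow_ne_zero 2 (by linarith [ht.1])
  rw [intervalIntegrable_iff_integrableOn_Icc_of_le hx]
  refine (integrableOn_mul_sum_Icc (fun k ↦ if k.Prime then (1 : ℝ) else 0) (m := 0)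
    zero_le_two hcont.integrableOn_Icc).congr_fun (fun t _ ↦ ?_) measurableSet_Icc
  simp only [primeCounting_eq_sum_indicator, div_eq_inv_mul]

lemma primeInvSum_eq_primeCounting_div_add_integral {x : ℝ} (hx : 2 ≤ x) :
    primeInvSum x = (Nat.primeCounting ⌊x⌋₊ : ℝ) / x +
      ∫ t in (2 : ℝ)..x, (Nat.primeCounting ⌊t⌋₊ : ℝ) / t ^ 2 := by
  have hne {t : ℝ} (ht : t ∈ Icc 2 x) : t ≠ 0 := by linarith [ht.1]
  have hderiv : IntegrableOn (deriv fun t : ℝ ↦ t⁻¹) (Icc 2 x) := by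
    rw [deriv_inv']
    exact (ContinuousOn.neg <| .inv₀ (by fun_prop) fun t ht ↦
      pow_ne_zero 2 (hne ht)).integrableOn_Icc
  have habel := sum_mul_eq_sub_integral_mul₁ (fun k ↦ if k.Prime then (1 : ℝ) else 0)
    (by simp [Nat.not_prime_zero]) (by simp [Nat.not_prime_one]) x
    (fun t ht ↦ differentiableAt_inv (hne ht)) hderiv
  rw [← intervalIntegral.integral_of_le hx, ← primeCounting_eq_sum_indicator] at habel
  rw [primeInvSum, Nat.primesLE_eq_filter_Icc_zero, Finset.sum_filter, div_eq_inv_mul]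
  simp only [mul_ite, mul_one, mul_zero] at habel
  rw [habel, sub_eq_add_neg, ← intervalIntegral.integral_neg]
  congr 1
  refine intervalIntegral.integral_congr fun t _ ↦ ?_
  simp only [primeCounting_eq_sum_indicator, deriv_inv]
  ring

lemma tendsto_log_log_atTop : Tendsto (fun x ↦ Real.log (Real.log x)) atTop atTop :=
  Real.tendsto_log_atTop.comp Real.tendsto_log_atTop

lemma isLittleO_const_log_log (c : ℝ) :
    (fun _ : ℝ ↦ c) =o[atTop] fun x ↦ Real.log (Real.log x) :=
  isLittleO_const_left.mpr (.inr (tendsto_norm_atTop_atTop.comp tendsto_log_log_atTop))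

lemma isEquivalent_integral_inv_div_log :
    (fun x ↦ ∫ t in (2 : ℝ)..x, t⁻¹ / Real.log t) ~[atTop] fun x ↦ Real.log (Real.log x) := by
  have h : (fun x ↦ Real.log (Real.log x) - Real.log (Real.log 2)) ~[atTop]
      fun x ↦ Real.log (Real.log x) :=
    IsEquivalent.refl.sub_isLittleO (isLittleO_const_log_log _)
  refine h.congr_left ?_
  filter_upwards [eventually_gt_atTop 1] with x hx
  exact (integral_inv_div_log one_lt_two hx).symm

lemma intervalIntegrable_inv_div_log {x : ℝ} (hx : 2 ≤ x) :
    IntervalIntegrable (fun t ↦ t⁻¹ / Real.log t) volume 2 x := by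
  refine ContinuousOn.intervalIntegrable fun t ht ↦ ContinuousAt.continuousWithinAt ?_
  rw [uIcc_of_le hx] at ht
  have ht0 : t ≠ 0 := by linarith [ht.1]
  have hlog : Real.log t ≠ 0 := (Real.log_pos (by linarith [ht.1])).ne'
  fun_prop (disch := assumption)

theorem primeInvSum_isEquivalent : primeInvSum ~[atTop] fun x ↦ Real.log (Real.log x) := by
  have hbdd : (fun x : ℝ ↦ (Nat.primeCounting ⌊x⌋₊ : ℝ) / x) =O[atTop] fun _ ↦ (1 : ℝ) := by
    refine .of_bound 1 ?_
    filter_upwards [eventually_gt_atTop 0] with x hx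
    rw [Real.norm_of_nonneg (by positivity), norm_one, one_mul, div_le_one hx]
    exact primeCounting_floor_le hx.le
  have hhead : (fun x : ℝ ↦ (Nat.primeCounting ⌊x⌋₊ : ℝ) / x) =o[atTop]
      fun x ↦ Real.log (Real.log x) :=
    hbdd.trans_isLittleO (isLittleO_const_log_log 1)
  have hpi : (fun t : ℝ ↦ (Nat.primeCounting ⌊t⌋₊ : ℝ) / t ^ 2) ~[atTop]
      fun t ↦ t⁻¹ / Real.log t := by
    refine (primeCounting_isEquivalent.div (.refl (u := fun t ↦ t ^ 2))).congr_right ?_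
    filter_upwards [eventually_gt_atTop 1] with t ht
    simp only [Pi.div_apply]
    field_simp
  have hintegral := (isEquivalent_intervalIntegral hpi
    (fun x ↦ intervalIntegrable_primeCounting_div_sq) (fun x ↦ intervalIntegrable_inv_div_log)
    (fun t ht ↦ div_nonneg (by positivity) (Real.log_nonneg (by linarith)))
    (isEquivalent_integral_inv_div_log.symm.tendsto_atTop tendsto_log_log_atTop)).trans
    isEquivalent_integral_inv_div_log
  refine (hhead.add_isEquivalent hintegral).congr_left ?_
  filter_upwards [eventually_ge_atTop 2] with x hx
  exact (primeInvSum_eq_primeCounting_div_add_integral hx).symm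

end Mertens

section SquarefreeAlmostPrimes

variable {k m p : ℕ} {x : ℝ}

/-- The squarefree positive integers `n ≤ x` with exactly `k` prime factors, whose number is
`π_k(x)`. -/
noncomputable def squarefreeAlmostPrimes (k : ℕ) (x : ℝ) : Finset ℕ :=
  (Finset.range (⌊x⌋₊ + 1)).filter fun n ↦ Squarefree n ∧ n.primeFactors.card = k

lemma mem_squarefreeAlmostPrimes :
    m ∈ squarefreeAlmostPrimes k x ↔ m ≤ ⌊x⌋₊ ∧ Squarefree m ∧ m.primeFactors.card = k := by
  simp [squarefreeAlmostPrimes]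

lemma squarefreeAlmostPrimes_mono : Monotone (squarefreeAlmostPrimes k) := fun _ _ hxy _ hm ↦ by
  rw [mem_squarefreeAlmostPrimes] at hm ⊢
  exact ⟨hm.1.trans (Nat.floor_mono hxy), hm.2⟩

lemma pos_of_mem_squarefreeAlmostPrimes (hm : m ∈ squarefreeAlmostPrimes k x) : 0 < m :=
  Nat.pos_of_ne_zero (mem_squarefreeAlmostPrimes.mp hm).2.1.ne_zero

lemma le_of_mem_squarefreeAlmostPrimes (hm : m ∈ squarefreeAlmostPrimes k x) : (m : ℝ) ≤ x :=
  (Nat.le_floor_iff' (pos_of_mem_squarefreeAlmostPrimes hm).ne').mp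
    (mem_squarefreeAlmostPrimes.mp hm).1

lemma one_le_div_of_mem_squarefreeAlmostPrimes (hm : m ∈ squarefreeAlmostPrimes k x) :
    1 ≤ x / m :=
  (one_le_div (Nat.cast_pos.mpr (pos_of_mem_squarefreeAlmostPrimes hm))).mpr
    (le_of_mem_squarefreeAlmostPrimes hm)

lemma squarefreeAlmostPrimes_zero_of_one_le (hx : 1 ≤ x) :
    squarefreeAlmostPrimes 0 x = {1} := by
  ext n
  rw [mem_squarefreeAlmostPrimes, Finset.card_eq_zero, Nat.primeFactors_eq_empty,
    Finset.mem_singleton]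
  constructor
  · rintro ⟨-, hn, rfl | rfl⟩
    exacts [absurd hn not_squarefree_zero, rfl]
  · rintro rfl
    exact ⟨(Nat.one_le_floor_iff x).mpr hx, squarefree_one, .inr rfl⟩

lemma card_squarefreeAlmostPrimes_le (hx : 0 ≤ x) :
    ((squarefreeAlmostPrimes k x).card : ℝ) ≤ x := by
  have hsub : squarefreeAlmostPrimes k x ⊆ Finset.Icc 1 ⌊x⌋₊ := fun n hn ↦
    Finset.mem_Icc.mpr
      ⟨pos_of_mem_squarefreeAlmostPrimes hn, (mem_squarefreeAlmostPrimes.mp hn).1⟩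
  calc ((squarefreeAlmostPrimes k x).card : ℝ) ≤ ⌊x⌋₊ := by
        simpa using Finset.card_le_card hsub
    _ ≤ x := Nat.floor_le hx

lemma mul_mem_squarefreeAlmostPrimes_iff (hp : p.Prime) (hpm : ¬p ∣ m) :
    m * p ∈ squarefreeAlmostPrimes (k + 1) x ↔
      m ∈ squarefreeAlmostPrimes k x ∧ p ∈ Nat.primesLE ⌊x / m⌋₊ := by
  have hcop : m.Coprime p := ((Nat.Prime.coprime_iff_not_dvd hp).mpr hpm).symm
  have hcard : (m * p).primeFactors.card = m.primeFactors.card + 1 := by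
    rw [hcop.primeFactors_mul, Finset.card_union_of_disjoint hcop.disjoint_primeFactors,
      hp.primeFactors, Finset.card_singleton]
  have hm : 0 < m := Nat.pos_of_ne_zero fun h ↦ hpm (h ▸ dvd_zero p)
  simp only [mem_squarefreeAlmostPrimes, hcard, Nat.squarefree_mul_iff, hp.squarefree,
    Nat.mem_primesLE, hp, Nat.floor_div_natCast, Nat.le_div_iff_mul_le hm, mul_comm p m]
  have hle : m * p ≤ ⌊x⌋₊ → m ≤ ⌊x⌋₊ := (Nat.le_mul_of_pos_right m hp.pos).trans
  rw [Nat.add_right_cancel_iff]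
  tauto

/-- Both sides run over the pairs `(m, p)` with `n = m * p` and `p` a prime not dividing `m`. -/
lemma sum_sum_primeFactors_eq {M : Type*} [AddCommMonoid M] (g : ℕ → ℕ → M) (k : ℕ) (x : ℝ) :
    ∑ n ∈ squarefreeAlmostPrimes (k + 1) x, ∑ p ∈ n.primeFactors, g (n / p) p =
      ∑ m ∈ squarefreeAlmostPrimes k x,
        ∑ p ∈ Nat.primesLE ⌊x / m⌋₊ with ¬p ∣ m, g m p := by
  rw [Finset.sum_sigma', Finset.sum_sigma']
  refine Finset.sum_bij' (fun a _ ↦ ⟨a.1 / a.2, a.2⟩) (fun a _ ↦ ⟨a.1 * a.2, a.2⟩) ?_ ?_ ?_ ?_ ?_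
  · rintro ⟨n, p⟩ h
    obtain ⟨hn, hp, hpn, -⟩ : _ ∧ p.Prime ∧ p ∣ n ∧ n ≠ 0 := by simpa using h
    obtain ⟨m, rfl⟩ := exists_eq_mul_left_of_dvd hpn
    have hsq := (mem_squarefreeAlmostPrimes.mp hn).2.1
    have hpm : ¬p ∣ m := fun hpm ↦
      hp.not_isUnit (hsq p (mul_dvd_mul_right hpm p))
    simpa [Nat.mul_div_cancel _ hp.pos, hpm, and_assoc] using
      (mul_mem_squarefreeAlmostPrimes_iff hp hpm).mp hn
  · rintro ⟨m, p⟩ h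
    obtain ⟨hm, hpx, hpm⟩ : _ ∧ p ∈ Nat.primesLE _ ∧ ¬p ∣ m := by simpa using h
    have hp := Nat.prime_of_mem_primesLE hpx
    have hn := (mul_mem_squarefreeAlmostPrimes_iff hp hpm).mpr ⟨hm, hpx⟩
    simpa [hn, hp, hp.ne_zero] using (pos_of_mem_squarefreeAlmostPrimes hm).ne'
  · rintro ⟨n, p⟩ h
    obtain ⟨-, -, hpn, -⟩ : _ ∧ p.Prime ∧ p ∣ n ∧ n ≠ 0 := by simpa using h
    simp [Nat.div_mul_cancel hpn]
  · rintro ⟨m, p⟩ h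
    obtain ⟨-, hpx, -⟩ : _ ∧ p ∈ Nat.primesLE _ ∧ ¬p ∣ m := by simpa using h
    simp [Nat.mul_div_cancel _ (Nat.prime_of_mem_primesLE hpx).pos]
  · exact fun _ _ ↦ rfl

end SquarefreeAlmostPrimes

section ReciprocalSums

variable {k m : ℕ} {x : ℝ}

lemma isEquivalent_of_eventually_le_of_le {α : Type*} {l : Filter α} {f g h v : α → ℝ}
    (hg : g ~[l] v) (hh : h ~[l] v) (hgf : ∀ᶠ x in l, g x ≤ f x) (hfh : ∀ᶠ x in l, f x ≤ h x) :
    f ~[l] v := by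
  refine isLittleO_iff.mpr fun ε hε ↦ ?_
  filter_upwards [hgf, hfh, hg.isLittleO.bound hε, hh.isLittleO.bound hε] with x hgf hfh hg hh
  simp only [Pi.sub_apply, Real.norm_eq_abs, abs_le] at hg hh ⊢
  constructor <;> linarith

/-- The sum of `1 / m` over the squarefree `m ≤ x` with exactly `k` prime factors. -/
noncomputable def squarefreeInvSum (k : ℕ) (x : ℝ) : ℝ :=
  ∑ m ∈ squarefreeAlmostPrimes k x, (m : ℝ)⁻¹

lemma squarefreeInvSum_nonneg : 0 ≤ squarefreeInvSum k x :=
  Finset.sum_nonneg fun _ _ ↦ by positivity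

lemma primeInvSum_mono : Monotone primeInvSum := fun _ _ hxy ↦
  Finset.sum_le_sum_of_subset_of_nonneg (Nat.primesLE_mono (Nat.floor_mono hxy))
    fun _ _ _ ↦ by positivity

lemma succ_mul_squarefreeInvSum_succ (k : ℕ) (x : ℝ) :
    (k + 1) * squarefreeInvSum (k + 1) x = ∑ m ∈ squarefreeAlmostPrimes k x,
      (m : ℝ)⁻¹ * ∑ p ∈ Nat.primesLE ⌊x / m⌋₊ with ¬p ∣ m, (p : ℝ)⁻¹ := by
  simp only [Finset.mul_sum, ← mul_inv]
  rw [← sum_sum_primeFactors_eq (fun m p ↦ ((m : ℝ) * p)⁻¹), squarefreeInvSum, Finset.mul_sum]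
  refine Finset.sum_congr rfl fun n hn ↦ ?_
  have hterm : ∀ p ∈ n.primeFactors, (((n / p : ℕ) : ℝ) * p)⁻¹ = (n : ℝ)⁻¹ := fun p hp ↦ by
    rw [← Nat.cast_mul, Nat.div_mul_cancel (Nat.dvd_of_mem_primeFactors hp)]
  rw [Finset.sum_congr rfl hterm, Finset.sum_const, (mem_squarefreeAlmostPrimes.mp hn).2.2,
    nsmul_eq_mul, Nat.cast_succ]

lemma succ_mul_squarefreeInvSum_succ_le (hx : 0 ≤ x) :
    (k + 1) * squarefreeInvSum (k + 1) x ≤ squarefreeInvSum k x * primeInvSum x := by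
  rw [succ_mul_squarefreeInvSum_succ, squarefreeInvSum, Finset.sum_mul]
  refine Finset.sum_le_sum fun m hm ↦ mul_le_mul_of_nonneg_left ?_ (by positivity)
  calc ∑ p ∈ Nat.primesLE ⌊x / m⌋₊ with ¬p ∣ m, (p : ℝ)⁻¹ ≤ primeInvSum (x / m) :=
        Finset.sum_le_sum_of_subset_of_nonneg (Finset.filter_subset _ _)
          fun _ _ _ ↦ by positivity
    _ ≤ primeInvSum x := primeInvSum_mono <|
        div_le_self hx (Nat.one_le_cast.mpr (pos_of_mem_squarefreeAlmostPrimes hm))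

lemma primeInvSum_sub_card_le_sum_not_dvd (hm : m ≠ 0) {y : ℝ} :
    primeInvSum y - m.primeFactors.card ≤
      ∑ p ∈ Nat.primesLE ⌊y⌋₊ with ¬p ∣ m, (p : ℝ)⁻¹ := by
  rw [primeInvSum, ← Finset.sum_filter_add_sum_filter_not _ (· ∣ m), sub_le_iff_le_add']
  gcongr
  calc ∑ p ∈ Nat.primesLE ⌊y⌋₊ with p ∣ m, (p : ℝ)⁻¹ ≤ ∑ p ∈ m.primeFactors, (p : ℝ)⁻¹ :=
        Finset.sum_le_sum_of_subset_of_nonneg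
          (fun p hp ↦ by simp_all [Nat.mem_primesLE]) fun _ _ _ ↦ by positivity
    _ ≤ ∑ _p ∈ m.primeFactors, (1 : ℝ) :=
        Finset.sum_le_sum fun _ _ ↦ Nat.cast_inv_le_one _
    _ = m.primeFactors.card := by simp

lemma le_succ_mul_squarefreeInvSum_succ (hx : 1 ≤ x) :
    squarefreeInvSum k √x * (primeInvSum √x - k) ≤ (k + 1) * squarefreeInvSum (k + 1) x := by
  have hsqrt : √x ≤ x := (Real.sqrt_le_left (by linarith)).mpr (le_self_pow₀ hx two_ne_zero)
  rw [succ_mul_squarefreeInvSum_succ, squarefreeInvSum, Finset.sum_mul]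
  calc ∑ m ∈ squarefreeAlmostPrimes k √x, (m : ℝ)⁻¹ * (primeInvSum √x - k)
      ≤ ∑ m ∈ squarefreeAlmostPrimes k √x,
          (m : ℝ)⁻¹ * ∑ p ∈ Nat.primesLE ⌊x / m⌋₊ with ¬p ∣ m, (p : ℝ)⁻¹ := by
        refine Finset.sum_le_sum fun m hm ↦ mul_le_mul_of_nonneg_left ?_ (by positivity)
        have hm0 := pos_of_mem_squarefreeAlmostPrimes hm
        have hxm : √x ≤ x / m := by
          rw [le_div_iff₀ (Nat.cast_pos.mpr hm0)]
          calc √x * m ≤ √x * √x := by gcongr; exact le_of_mem_squarefreeAlmostPrimes hm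
            _ = x := Real.mul_self_sqrt (by linarith)
        refine le_trans ?_ (primeInvSum_sub_card_le_sum_not_dvd hm0.ne')
        rw [(mem_squarefreeAlmostPrimes.mp hm).2.2]
        gcongr
        exact primeInvSum_mono hxm
    _ ≤ _ := Finset.sum_le_sum_of_subset_of_nonneg (squarefreeAlmostPrimes_mono hsqrt)
        fun m _ _ ↦ mul_nonneg (by positivity) (Finset.sum_nonneg fun _ _ ↦ by positivity)

lemma log_log_sqrt_isEquivalent :
    (fun x ↦ Real.log (Real.log √x)) ~[atTop] fun x ↦ Real.log (Real.log x) := by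
  have h : (fun x ↦ Real.log (Real.log x) - Real.log 2) ~[atTop] fun x ↦ Real.log (Real.log x) :=
    IsEquivalent.refl.sub_isLittleO (isLittleO_const_log_log _)
  refine h.congr_left ?_
  filter_upwards [eventually_gt_atTop 1] with x hx
  rw [Real.log_sqrt (by linarith), Real.log_div (Real.log_pos hx).ne' two_ne_zero]

theorem squarefreeInvSum_isEquivalent (k : ℕ) :
    squarefreeInvSum k ~[atTop] fun x ↦ Real.log (Real.log x) ^ k / k.factorial := by
  induction k with
  | zero =>
    refine EventuallyEq.isEquivalent ?_
    filter_upwards [eventually_ge_atTop 1] with x hx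
    simp [squarefreeInvSum, squarefreeAlmostPrimes_zero_of_one_le hx]
  | succ k ih =>
    let v : ℝ → ℝ := fun x ↦ Real.log (Real.log x) ^ k / k.factorial * Real.log (Real.log x)
    have hupper : (fun x ↦ squarefreeInvSum k x * primeInvSum x) ~[atTop] v :=
      ih.mul primeInvSum_isEquivalent
    have hshift : (fun x ↦ primeInvSum x - k) ~[atTop] fun x ↦ Real.log (Real.log x) :=
      primeInvSum_isEquivalent.sub_isLittleO (isLittleO_const_log_log k)
    have hlower : (fun x ↦ squarefreeInvSum k √x * (primeInvSum √x - k)) ~[atTop] v :=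
      ((ih.mul hshift).comp_tendsto Real.tendsto_sqrt_atTop).trans
        (((log_log_sqrt_isEquivalent.pow k).div .refl).mul log_log_sqrt_isEquivalent)
    have hmul : (fun x ↦ (k + 1) * squarefreeInvSum (k + 1) x) ~[atTop] v :=
      isEquivalent_of_eventually_le_of_le hlower hupper
        ((eventually_ge_atTop 1).mono fun x ↦ le_succ_mul_squarefreeInvSum_succ)
        ((eventually_ge_atTop 0).mono fun x ↦ succ_mul_squarefreeInvSum_succ_le)
    refine ((IsEquivalent.refl (u := fun _ ↦ ((k : ℝ) + 1)⁻¹)).mul hmul).congr_left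
      (.of_forall fun x ↦ ?_) |>.congr_right (.of_forall fun x ↦ ?_)
    · simp only [Pi.mul_apply]
      field_simp
    · simp only [Pi.mul_apply, v, Nat.factorial_succ, Nat.cast_mul, Nat.cast_succ, pow_succ]
      field_simp

end ReciprocalSums

section LogSums

variable {k m : ℕ} {x y : ℝ}

/-- The sum of `log n` over the squarefree `n ≤ x` with exactly `k` prime factors. -/
noncomputable def squarefreeLogSum (k : ℕ) (x : ℝ) : ℝ :=
  ∑ n ∈ squarefreeAlmostPrimes k x, Real.log n

lemma sum_log_primeFactors_of_squarefree {n : ℕ} (hn : Squarefree n) :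
    ∑ p ∈ n.primeFactors, Real.log p = Real.log n := by
  rw [← Real.log_prod fun p hp ↦ Nat.cast_ne_zero.mpr (Nat.prime_of_mem_primeFactors hp).ne_zero,
    ← Nat.cast_prod, Nat.prod_primeFactors_of_squarefree hn]

lemma squarefreeLogSum_succ (k : ℕ) (x : ℝ) :
    squarefreeLogSum (k + 1) x = ∑ m ∈ squarefreeAlmostPrimes k x,
      ∑ p ∈ Nat.primesLE ⌊x / m⌋₊ with ¬p ∣ m, Real.log p := by
  rw [← sum_sum_primeFactors_eq fun _ p ↦ Real.log p, squarefreeLogSum]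
  exact Finset.sum_congr rfl fun n hn ↦
    (sum_log_primeFactors_of_squarefree (mem_squarefreeAlmostPrimes.mp hn).2.1).symm

lemma abs_sum_log_not_dvd_sub_theta_le (hm : m ≠ 0) (hy : 1 ≤ y) :
    |(∑ p ∈ Nat.primesLE ⌊y⌋₊ with ¬p ∣ m, Real.log p) - Chebyshev.theta y| ≤
      m.primeFactors.card * Real.log y := by
  rw [Chebyshev.theta_eq_sum_primesLE,
    ← Finset.sum_filter_not_add_sum_filter (Nat.primesLE ⌊y⌋₊) (· ∣ m), sub_add_cancel_left,
    abs_neg, abs_of_nonneg (Finset.sum_nonneg fun p _ ↦ Real.log_natCast_nonneg p)]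
  have hsub : (Nat.primesLE ⌊y⌋₊).filter (· ∣ m) ⊆ m.primeFactors := fun p hp ↦ by
    simp_all [Nat.mem_primesLE]
  have hlog : ∀ p ∈ (Nat.primesLE ⌊y⌋₊).filter (· ∣ m), Real.log p ≤ Real.log y := fun p hp ↦ by
    obtain ⟨hpy, hprime⟩ := Nat.mem_primesLE.mp (Finset.mem_filter.mp hp).1
    exact Real.log_le_log (Nat.cast_pos.mpr hprime.pos) ((Nat.le_floor_iff' hprime.ne_zero).mp hpy)
  calc ∑ p ∈ Nat.primesLE ⌊y⌋₊ with p ∣ m, Real.log p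
      ≤ ((Nat.primesLE ⌊y⌋₊).filter (· ∣ m)).card * Real.log y := by
        simpa only [nsmul_eq_mul] using Finset.sum_le_card_nsmul _ _ _ hlog
    _ ≤ m.primeFactors.card * Real.log y := by
        gcongr
        exact Real.log_nonneg hy

lemma exists_abs_theta_sub_add_mul_log_le (c : ℝ) {ε : ℝ} (hε : 0 < ε) :
    ∃ C, ∀ y, 1 ≤ y → |Chebyshev.theta y - y| + c * Real.log y ≤ ε * y + C := by
  have ho : (fun y ↦ |Chebyshev.theta y - y| + c * Real.log y) =o[atTop] fun y : ℝ ↦ y :=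
    theta_isEquivalent.isLittleO.abs_left.add (Real.isLittleO_log_id_atTop.const_mul_left c)
  obtain ⟨A, hA⟩ := ((ho.bound hε).and (eventually_ge_atTop 0)).exists_forall_of_atTop
  have hA0 : 0 ≤ A := (hA A le_rfl).2
  refine ⟨Chebyshev.theta A + A + |c| * A, fun y hy ↦ ?_⟩
  rcases le_total A y with hAy | hyA
  · have hmain := (Real.le_norm_self _).trans (hA y hAy).1
    rw [Real.norm_of_nonneg (by linarith)] at hmain
    linarith [Chebyshev.theta_nonneg A, mul_nonneg (abs_nonneg c) hA0]
  · have htheta : |Chebyshev.theta y - y| ≤ Chebyshev.theta A + A := by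
      have hmono := Chebyshev.theta_mono hyA
      have hnonneg := Chebyshev.theta_nonneg y
      rw [abs_le]
      constructor <;> linarith
    have hlog : c * Real.log y ≤ |c| * A := by
      refine mul_le_mul (le_abs_self c) ?_ (Real.log_nonneg hy) (abs_nonneg c)
      exact (Real.log_le_self (by linarith)).trans hyA
    linarith [mul_pos hε (by linarith : 0 < y)]

lemma abs_squarefreeLogSum_succ_sub_le {ε : ℝ} (hε : 0 < ε) (k : ℕ) :
    ∃ C, ∀ x, |squarefreeLogSum (k + 1) x - x * squarefreeInvSum k x| ≤
      ε * (x * squarefreeInvSum k x) + C * (squarefreeAlmostPrimes k x).card := by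
  obtain ⟨C, hC⟩ := exists_abs_theta_sub_add_mul_log_le k hε
  refine ⟨C, fun x ↦ ?_⟩
  have hterm : ∀ m ∈ squarefreeAlmostPrimes k x,
      |(∑ p ∈ Nat.primesLE ⌊x / m⌋₊ with ¬p ∣ m, Real.log p) - x * (m : ℝ)⁻¹| ≤
        ε * (x * (m : ℝ)⁻¹) + C := fun m hm ↦ by
    have hy := one_le_div_of_mem_squarefreeAlmostPrimes hm
    have hdvd := abs_sum_log_not_dvd_sub_theta_le
      (pos_of_mem_squarefreeAlmostPrimes hm).ne' hy
    rw [(mem_squarefreeAlmostPrimes.mp hm).2.2] at hdvd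
    rw [← div_eq_mul_inv]
    exact (abs_sub_le _ (Chebyshev.theta (x / m)) _).trans (by linarith [hC _ hy])
  calc |squarefreeLogSum (k + 1) x - x * squarefreeInvSum k x|
      = |∑ m ∈ squarefreeAlmostPrimes k x,
          ((∑ p ∈ Nat.primesLE ⌊x / m⌋₊ with ¬p ∣ m, Real.log p) - x * (m : ℝ)⁻¹)| := by
        rw [squarefreeLogSum_succ, squarefreeInvSum, Finset.mul_sum, Finset.sum_sub_distrib]
    _ ≤ ∑ m ∈ squarefreeAlmostPrimes k x, (ε * (x * (m : ℝ)⁻¹) + C) :=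
        (Finset.abs_sum_le_sum_abs _ _).trans (Finset.sum_le_sum hterm)
    _ = _ := by
        rw [Finset.sum_add_distrib, ← Finset.mul_sum, ← Finset.mul_sum, Finset.sum_const,
          nsmul_eq_mul, squarefreeInvSum, mul_comm C]

lemma card_squarefreeAlmostPrimes_isLittleO (k : ℕ) :
    (fun x ↦ ((squarefreeAlmostPrimes k x).card : ℝ)) =o[atTop]
      fun x ↦ x * squarefreeInvSum k x := by
  rcases k.eq_zero_or_pos with rfl | hk
  · refine (isLittleO_const_id_atTop (1 : ℝ)).congr' ?_ ?_ <;>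
      filter_upwards [eventually_ge_atTop 1] with x hx <;>
      simp [squarefreeInvSum, squarefreeAlmostPrimes_zero_of_one_le hx]
  · have hcard : (fun x ↦ ((squarefreeAlmostPrimes k x).card : ℝ)) =O[atTop] fun x : ℝ ↦ x := by
      refine .of_bound 1 ?_
      filter_upwards [eventually_ge_atTop 0] with x hx
      simpa [abs_of_nonneg hx] using card_squarefreeAlmostPrimes_le hx
    have hlim : Tendsto (squarefreeInvSum k) atTop atTop :=
      (squarefreeInvSum_isEquivalent k).symm.tendsto_atTop <|
        ((tendsto_pow_atTop hk.ne').comp tendsto_log_log_atTop).atTop_div_const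
          (Nat.cast_pos.mpr k.factorial_pos)
    have hone : (fun _ ↦ 1 : ℝ → ℝ) =o[atTop] squarefreeInvSum k :=
      isLittleO_const_left.mpr (.inr (tendsto_norm_atTop_atTop.comp hlim))
    simpa only [mul_one] using hcard.mul_isLittleO hone

theorem squarefreeLogSum_succ_isEquivalent (k : ℕ) :
    squarefreeLogSum (k + 1) ~[atTop] fun x ↦ x * squarefreeInvSum k x := by
  refine isLittleO_iff.mpr fun ε hε ↦ ?_
  obtain ⟨C, hC⟩ := abs_squarefreeLogSum_succ_sub_le (half_pos hε) k
  filter_upwards [eventually_ge_atTop 0,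
    ((card_squarefreeAlmostPrimes_isLittleO k).const_mul_left C).bound (half_pos hε)] with x hx hN
  have hL : 0 ≤ x * squarefreeInvSum k x := mul_nonneg hx squarefreeInvSum_nonneg
  rw [Real.norm_of_nonneg hL] at hN ⊢
  exact (hC x).trans (by linarith [Real.le_norm_self (C * (squarefreeAlmostPrimes k x).card)])

end LogSums

section Counting

variable {P : ℕ → Prop} [DecidablePred P] {x : ℝ}

lemma sum_log_le_card_mul_log (hx : 1 ≤ x) :
    ∑ n ∈ Finset.range (⌊x⌋₊ + 1) with P n, Real.log n ≤
      ((Finset.range (⌊x⌋₊ + 1)).filter P).card * Real.log x := by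
  rw [← nsmul_eq_mul]
  refine Finset.sum_le_card_nsmul _ _ _ fun n hn ↦ ?_
  rcases n.eq_zero_or_pos with rfl | hn0
  · simpa using Real.log_nonneg hx
  · have hnx : n ≤ ⌊x⌋₊ := Nat.lt_succ_iff.mp (Finset.mem_range.mp (Finset.mem_filter.mp hn).1)
    exact Real.log_le_log (Nat.cast_pos.mpr hn0) ((Nat.le_floor_iff' hn0.ne').mp hnx)

lemma log_sub_log_natCast_le {δ : ℝ} (hδ : 0 ≤ δ) (hx : 1 ≤ x) (n : ℕ) :
    Real.log x - Real.log n ≤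
      δ * Real.log x + if (n : ℝ) < x ^ (1 - δ) then Real.log x else 0 := by
  have hlogx := Real.log_nonneg hx
  split_ifs with hn
  · linarith [mul_nonneg hδ hlogx, Real.log_natCast_nonneg n]
  · have hpow : 0 < x ^ (1 - δ) := Real.rpow_pos_of_pos (by linarith) _
    have hlog := Real.log_le_log hpow (not_lt.mp hn)
    rw [Real.log_rpow (by linarith)] at hlog
    linarith

lemma card_mul_log_sub_sum_log_le {δ : ℝ} (hδ : 0 ≤ δ) (hx : 1 ≤ x) :
    (((Finset.range (⌊x⌋₊ + 1)).filter P).card : ℝ) * Real.log x -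
        ∑ n ∈ Finset.range (⌊x⌋₊ + 1) with P n, Real.log n ≤
      δ * (((Finset.range (⌊x⌋₊ + 1)).filter P).card * Real.log x) +
        (x ^ (1 - δ) + 1) * Real.log x := by
  set s := (Finset.range (⌊x⌋₊ + 1)).filter P
  have hsmall : ((s.filter fun n : ℕ ↦ (n : ℝ) < x ^ (1 - δ)).card : ℝ) ≤ x ^ (1 - δ) + 1 := by
    have hsub : s.filter (fun n : ℕ ↦ (n : ℝ) < x ^ (1 - δ)) ⊆
        Finset.range ⌈x ^ (1 - δ)⌉₊ := fun n hn ↦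
      Finset.mem_range.mpr (Nat.lt_ceil.mpr (Finset.mem_filter.mp hn).2)
    calc _ ≤ ((Finset.range ⌈x ^ (1 - δ)⌉₊).card : ℝ) := mod_cast Finset.card_le_card hsub
      _ ≤ x ^ (1 - δ) + 1 := by
        rw [Finset.card_range]
        exact (Nat.ceil_lt_add_one (by positivity)).le
  calc (s.card : ℝ) * Real.log x - ∑ n ∈ s, Real.log n
      = ∑ n ∈ s, (Real.log x - Real.log n) := by
        rw [Finset.sum_sub_distrib, Finset.sum_const, nsmul_eq_mul]
    _ ≤ ∑ n ∈ s, (δ * Real.log x + if (n : ℝ) < x ^ (1 - δ) then Real.log x else 0) :=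
        Finset.sum_le_sum fun n _ ↦ log_sub_log_natCast_le hδ hx n
    _ = δ * (s.card * Real.log x) +
          (s.filter fun n : ℕ ↦ (n : ℝ) < x ^ (1 - δ)).card * Real.log x := by
        rw [Finset.sum_add_distrib, Finset.sum_const, nsmul_eq_mul, ← Finset.sum_filter,
          Finset.sum_const, nsmul_eq_mul, mul_left_comm]
    _ ≤ _ := by
        gcongr
        exact Real.log_nonneg hx

lemma rpow_one_sub_add_one_mul_log_isLittleO {δ : ℝ} (hδ : 0 < δ) :
    (fun x ↦ (x ^ (1 - δ) + 1) * Real.log x) =o[atTop] fun x : ℝ ↦ x := by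
  have hpow : (fun x : ℝ ↦ x ^ (1 - δ) * Real.log x) =o[atTop] fun x ↦ x := by
    refine ((isBigO_refl (fun x : ℝ ↦ x ^ (1 - δ)) atTop).mul_isLittleO
      (isLittleO_log_rpow_atTop hδ)).congr' .rfl ?_
    filter_upwards [eventually_gt_atTop 0] with x hx
    rw [← Real.rpow_add hx, sub_add_cancel, Real.rpow_one]
  simpa only [add_mul, one_mul] using hpow.add Real.isLittleO_log_id_atTop

/-- Most `n ≤ x` exceed `x ^ (1 - δ)`, so their weight `log n` may be replaced by `log x`. -/
theorem sum_log_isEquivalent_card_mul_log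
    (hP : (fun x : ℝ ↦ x) =O[atTop] fun x : ℝ ↦
      ∑ n ∈ Finset.range (⌊x⌋₊ + 1) with P n, Real.log n) :
    (fun x : ℝ ↦ ∑ n ∈ Finset.range (⌊x⌋₊ + 1) with P n, Real.log n) ~[atTop]
      fun x ↦ (((Finset.range (⌊x⌋₊ + 1)).filter P).card : ℝ) * Real.log x := by
  have hx : (fun x : ℝ ↦ x) =O[atTop]
      fun x ↦ (((Finset.range (⌊x⌋₊ + 1)).filter P).card : ℝ) * Real.log x := by
    refine hP.trans (.of_bound 1 ?_)
    filter_upwards [eventually_ge_atTop 1] with x hx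
    rw [Real.norm_of_nonneg (Finset.sum_nonneg fun n _ ↦ Real.log_natCast_nonneg n), one_mul]
    exact (sum_log_le_card_mul_log hx).trans (Real.le_norm_self _)
  refine isLittleO_iff.mpr fun ε hε ↦ ?_
  filter_upwards [eventually_ge_atTop 1, ((rpow_one_sub_add_one_mul_log_isLittleO
    (half_pos hε)).trans_isBigO hx).bound (half_pos hε)] with x hx hsmall
  have hcard := mul_nonneg (Nat.cast_nonneg (α := ℝ) ((Finset.range (⌊x⌋₊ + 1)).filter P).card)
    (Real.log_nonneg hx)
  rw [Real.norm_of_nonneg hcard] at hsmall ⊢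
  rw [Pi.sub_apply, norm_sub_rev, Real.norm_of_nonneg (sub_nonneg.mpr (sum_log_le_card_mul_log hx))]
  linarith [card_mul_log_sub_sum_log_le (P := P) (half_pos hε).le hx,
    Real.le_norm_self ((x ^ (1 - ε / 2) + 1) * Real.log x)]

end Counting

theorem squarefreeAlmostPrimes_card_isEquivalent (k : ℕ) :
    (fun x ↦ ((squarefreeAlmostPrimes (k + 1) x).card : ℝ)) ~[atTop]
      fun x ↦ x * Real.log (Real.log x) ^ k / (k.factorial * Real.log x) := by
  have hsum : squarefreeLogSum (k + 1) ~[atTop]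
      fun x ↦ x * (Real.log (Real.log x) ^ k / k.factorial) :=
    (squarefreeLogSum_succ_isEquivalent k).trans
      (IsEquivalent.refl.mul (squarefreeInvSum_isEquivalent k))
  have hx : (fun x : ℝ ↦ x) =O[atTop] squarefreeLogSum (k + 1) := by
    refine .trans (.of_bound k.factorial ?_) hsum.isBigO_symm
    filter_upwards [eventually_ge_atTop 0, tendsto_log_log_atTop.eventually_ge_atTop 1]
      with x hx hlog
    rw [Real.norm_of_nonneg hx, Real.norm_of_nonneg (by positivity), mul_left_comm,
      mul_div_cancel₀ _ (Nat.cast_ne_zero.mpr k.factorial_ne_zero)]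
    exact le_mul_of_one_le_right hx (one_le_pow₀ hlog)
  have hcard := (sum_log_isEquivalent_card_mul_log hx).symm.trans hsum
  refine ((hcard.div (.refl (u := Real.log))).congr_left ?_).congr_right ?_
  · filter_upwards [eventually_gt_atTop 1] with x hx
    exact mul_div_cancel_right₀ _ (Real.log_pos hx).ne'
  · exact .of_forall fun x ↦ by simp only [Pi.div_apply]; ring

end Landau

theorem stmt_4 (k : ℕ) (hk : 1 ≤ k) :
    IsEquivalent atTop
      (fun x : ℕ => (((Finset.range (x + 1)).filter
          (fun n => Squarefree n ∧ n.primeFactors.card = k)).card : ℝ))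
      (fun x : ℕ => x * (Real.log (Real.log x)) ^ (k - 1) /
          ((k - 1).factorial * Real.log x)) := by
  obtain ⟨j, rfl⟩ := Nat.exists_eq_add_of_le' hk
  simpa [Function.comp_def, Landau.squarefreeAlmostPrimes] using
    (Landau.squarefreeAlmostPrimes_card_isEquivalent j).comp_tendsto
      (tendsto_natCast_atTop_atTop (R := ℝ))
end
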